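/- arXiv:1504.02414 — 2 statements merged into one kernel-verified Lean document; each statement's English description precedes it below -/
import Mathlib

section
/- If G is a bipartite 2-connected simple graph, then pc(G) = 2, and moreover there exists a proper-path 2-coloring of G having the strong property. -/
open SimpleGraph

/-- An edge-coloring `c` with `k` colors is a proper-path coloring of `G` if every pair of
distinct vertices is joined by a path on which no two consecutive edges share a color. -/
def IsProperPathColoring {V : Type*} (G : SimpleGraph V) {k : ℕ}
    (c : Sym2 V → Fin k) : Prop :=
  ∀ u v : V, u ≠ v → ∃ p : G.Walk u v, p.IsPath ∧ (p.edges.map c).Chain' (· ≠ ·)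

/-- The proper connection number of `G`: the least number of colors in a
proper-path coloring of `G`. -/
noncomputable def pc {V : Type*} (G : SimpleGraph V) : ℕ :=
  sInf {k : ℕ | ∃ c : Sym2 V → Fin k, IsProperPathColoring G c}

/-- The strong property: any two distinct vertices are joined by two proper paths whose
first edge colors differ and whose last edge colors differ. -/
def HasStrongProperty {V : Type*} (G : SimpleGraph V) {k : ℕ}
    (c : Sym2 V → Fin k) : Prop :=
  ∀ u v : V, u ≠ v → ∃ p q : G.Walk u v,
    p.IsPath ∧ (p.edges.map c).Chain' (· ≠ ·) ∧
    q.IsPath ∧ (q.edges.map c).Chain' (· ≠ ·) ∧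
    (p.edges.map c).head? ≠ (q.edges.map c).head? ∧
    (p.edges.map c).getLast? ≠ (q.edges.map c).getLast?

/-- A graph is 2-connected if it has at least 3 vertices and removing any single
vertex leaves it connected. -/
def TwoConnected {V : Type*} (G : SimpleGraph V) : Prop :=
  3 ≤ Nat.card V ∧ ∀ v : V, (G.induce ({v}ᶜ : Set V)).Connected

/-!
By Robbins' theorem, a bridgeless connected graph has a strong orientation. Take one and color every
edge by the bipartition class of its tail. Along a directed path the tails alternate between the two
classes, so every directed path is proper; moreover its first edge has the color of its start and
its last edge does not have the color of its end. Hence a directed path from `u` to `v` and the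
reverse of a directed path from `v` to `u` witness the strong property.

Robbins' theorem itself comes from Zorn's lemma: a partial orientation in which every arc can be
returned along arcs stays such when the unoriented edges of a cycle are oriented along the cycle,
because the oriented ones can already be traversed in both directions. A maximal one therefore
orients every edge.
-/

open Relation

section CyclicOrientation

variable {V : Type*} {G : SimpleGraph V} {D : V → V → Prop} {u v w : V}

theorem dart_symm_notMem_darts_of_isTrail {p : G.Walk u v} (hp : p.IsTrail) {d : G.Dart}
    (hd : d ∈ p.darts) : d.symm ∉ p.darts := fun hd' =>
  d.symm_ne (List.inj_on_of_nodup_map hp.edges_nodup hd' hd d.edge_symm)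

theorem reflTransGen_of_mem_support {p : G.Walk u v}
    (hp : ∀ d ∈ p.darts, ReflTransGen D d.fst d.snd) (hw : w ∈ p.support) :
    ReflTransGen D u w ∧ ReflTransGen D w v := by
  induction p generalizing w with
  | nil =>
    obtain rfl : w = _ := by simpa using hw
    exact ⟨.refl, .refl⟩
  | cons h p ih =>
    rw [Walk.darts_cons, List.forall_mem_cons] at hp
    rw [Walk.support_cons, List.mem_cons] at hw
    obtain rfl | hw := hw
    · exact ⟨.refl, hp.1.trans (ih hp.2 p.start_mem_support).2⟩
    · exact ⟨hp.1.trans (ih hp.2 hw).1, (ih hp.2 hw).2⟩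

theorem exists_isPath_forall_darts (hD : ∀ a b, D a b → G.Adj a b) (h : ReflTransGen D u v) :
    ∃ p : G.Walk u v, p.IsPath ∧ ∀ d ∈ p.darts, D d.fst d.snd := by
  classical
  suffices ∃ p : G.Walk u v, ∀ d ∈ p.darts, D d.fst d.snd by
    obtain ⟨p, hp⟩ := this
    exact ⟨p.bypass, p.bypass_isPath, fun d hd => hp d (p.darts_bypass_subset_darts hd)⟩
  induction h using ReflTransGen.head_induction_on with
  | refl => exact ⟨.nil, by simp⟩
  | head hab _ ih =>
    obtain ⟨p, hp⟩ := ih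
    exact ⟨.cons (hD _ _ hab) p, by simpa using ⟨hab, hp⟩⟩

/-- A partial orientation of `G`, where `D a b` says that the edge `ab` is oriented from `a` to `b`,
that is totally cyclic: every arc can be returned along arcs. Edges may be left unoriented. -/
structure IsCyclicPartialOrientation (G : SimpleGraph V) (D : V → V → Prop) : Prop where
  adj : ∀ a b, D a b → G.Adj a b
  asymm : ∀ a b, D a b → ¬ D b a
  reflTransGen_swap : ∀ a b, D a b → ReflTransGen D b a

/-- The extension of the partial orientation `D` that orients the edges of the walk `p` left
unoriented by `D` in the direction in which `p` traverses them. -/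
def orientAlong (D : V → V → Prop) (p : G.Walk u v) (a b : V) : Prop :=
  D a b ∨ ¬ D b a ∧ ∃ h : G.Adj a b, ⟨(a, b), h⟩ ∈ p.darts

theorem le_orientAlong (D : V → V → Prop) (p : G.Walk u v) : D ≤ orientAlong D p :=
  fun _ _ => Or.inl

namespace IsCyclicPartialOrientation

theorem reflTransGen_orientAlong (hD : IsCyclicPartialOrientation G D) (p : G.Walk u v) :
    ∀ d ∈ p.darts, ReflTransGen (orientAlong D p) d.fst d.snd := by
  intro d hd
  by_cases hback : D d.snd d.fst
  · exact ReflTransGen.mono (le_orientAlong D p) _ _ (hD.reflTransGen_swap _ _ hback)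
  · exact .single (.inr ⟨hback, d.adj, hd⟩)

theorem orientAlong_of_isTrail (hD : IsCyclicPartialOrientation G D) {p : G.Walk u u}
    (hp : p.IsTrail) : IsCyclicPartialOrientation G (orientAlong D p) where
  adj := by
    rintro a b (hab | ⟨-, hab, -⟩)
    exacts [hD.adj a b hab, hab]
  asymm := by
    rintro a b (hab | ⟨hnot_ba, _, hd⟩) (hba | ⟨hnot_ab, _, hd'⟩)
    · exact hD.asymm a b hab hba
    · exact hnot_ab hab
    · exact hnot_ba hba
    · exact dart_symm_notMem_darts_of_isTrail hp hd hd'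
  reflTransGen_swap := by
    rintro a b (hab | ⟨-, _, hd⟩)
    · exact ReflTransGen.mono (le_orientAlong D p) _ _ (hD.reflTransGen_swap a b hab)
    · have hstep := hD.reflTransGen_orientAlong p
      obtain ⟨-, hto_start⟩ :=
        reflTransGen_of_mem_support hstep (p.dart_snd_mem_support_of_mem_darts hd)
      obtain ⟨hfrom_start, -⟩ :=
        reflTransGen_of_mem_support hstep (p.dart_fst_mem_support_of_mem_darts hd)
      exact hto_start.trans hfrom_start

theorem of_isChain {S : Set (V → V → Prop)} (hS : ∀ D ∈ S, IsCyclicPartialOrientation G D)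
    (hchain : IsChain (· ≤ ·) S) :
    IsCyclicPartialOrientation G (fun a b => ∃ D ∈ S, D a b) where
  adj := by
    rintro a b ⟨D, hDS, hab⟩
    exact (hS D hDS).adj a b hab
  asymm := by
    rintro a b ⟨D, hDS, hab⟩ ⟨E, hES, hba⟩
    obtain hle | hle := hchain.total hDS hES
    · exact (hS E hES).asymm a b (hle a b hab) hba
    · exact (hS D hDS).asymm a b hab (hle b a hba)
  reflTransGen_swap := by
    rintro a b ⟨D, hDS, hab⟩
    exact ReflTransGen.mono (fun _ _ h => ⟨D, hDS, h⟩) _ _ ((hS D hDS).reflTransGen_swap a b hab)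

theorem exists_maximal (G : SimpleGraph V) : ∃ D, Maximal (IsCyclicPartialOrientation G) D :=
  zorn_le₀ {D | IsCyclicPartialOrientation G D} fun _ hS hchain =>
    ⟨_, .of_isChain hS hchain, fun D hD _ _ hab => ⟨D, hD, hab⟩⟩

theorem rel_or_rel_of_maximal (hD : Maximal (IsCyclicPartialOrientation G) D) (huv : G.Adj u v)
    (hbridge : ¬ G.IsBridge s(u, v)) : D u v ∨ D v u := by
  rw [isBridge_iff_forall_cycle_notMem (G.mem_edgeSet.2 huv)] at hbridge
  push Not at hbridge
  obtain ⟨x, p, hp, huvp⟩ := hbridge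
  have hle := hD.le_of_ge (hD.prop.orientAlong_of_isTrail hp.isTrail) (le_orientAlong D p)
  obtain ⟨d, hd, hdedge⟩ := List.mem_map.1 huvp
  have hd_oriented : D d.fst d.snd ∨ D d.snd d.fst := by
    by_contra! hnot
    exact hnot.1 (hle _ _ (.inr ⟨hnot.2, d.adj, hd⟩))
  obtain ⟨hfst, hsnd⟩ | ⟨hfst, hsnd⟩ := dart_edge_eq_mk'_iff'.1 hdedge
  · simpa only [hfst, hsnd] using hd_oriented
  · simpa only [hfst, hsnd] using hd_oriented.symm

end IsCyclicPartialOrientation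

theorem exists_strong_orientation (hG : G.IsEdgeConnected 2) :
    ∃ D : V → V → Prop, (∀ a b, D a b → G.Adj a b) ∧ (∀ a b, D a b → ¬ D b a) ∧
      ∀ a b, ReflTransGen D a b := by
  obtain ⟨D, hD⟩ := IsCyclicPartialOrientation.exists_maximal G
  refine ⟨D, hD.prop.adj, hD.prop.asymm, fun a b => ?_⟩
  obtain ⟨p⟩ := hG.preconnected two_ne_zero a b
  refine (reflTransGen_of_mem_support (fun d _ => ?_) p.end_mem_support).1
  have hbridge : ¬ G.IsBridge s(d.fst, d.snd) := fun h => h.not_isEdgeReachable_two (hG _ _)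
  obtain h | h := IsCyclicPartialOrientation.rel_or_rel_of_maximal hD d.adj hbridge
  exacts [.single h, hD.prop.reflTransGen_swap _ _ h]

end CyclicOrientation

section TailColoring

variable {V α : Type*} {G : SimpleGraph V} {u v : V}

theorem exists_edge_labeling_eq_tail {D : V → V → Prop} (hD : ∀ a b, D a b → ¬ D b a) (f : V → α) :
    ∃ c : Sym2 V → α, ∀ a b, D a b → c s(a, b) = f a := by
  let edge (a : {a : V × V // D a.1 a.2}) : Sym2 V := s(a.1.1, a.1.2)
  have hedge : Function.Injective edge := by
    rintro ⟨⟨a, b⟩, hab⟩ ⟨⟨a', b'⟩, hab'⟩ h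
    obtain ⟨rfl, rfl⟩ | ⟨rfl, rfl⟩ := Sym2.eq_iff.1 h
    · rfl
    · exact absurd hab' (hD _ _ hab)
  refine ⟨Function.extend edge (fun a => f a.1.1) fun e => f e.out.1, fun a b hab => ?_⟩
  exact hedge.extend_apply _ _ ⟨(a, b), hab⟩

/-- The edge labeling `c` is induced along the walk `p` by the vertex labeling `f`: it gives every
edge of `p` the label of its tail, the endpoint that `p` visits first. -/
def IsTailColored (c : Sym2 V → α) (f : V → α) (p : G.Walk u v) : Prop :=
  ∀ d ∈ p.darts, c d.edge = f d.fst

namespace IsTailColored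

variable {c : Sym2 V → α} {f : V → α} {p : G.Walk u v}

theorem edges_map (hp : IsTailColored c f p) : p.edges.map c = p.support.dropLast.map f := by
  rw [← Walk.map_fst_darts, Walk.edges, List.map_map, List.map_map]
  exact List.map_congr_left hp

theorem isChain_edges_map {C : G.Coloring α} (hp : IsTailColored c C p) :
    (p.edges.map c).IsChain (· ≠ ·) := by
  rw [hp.edges_map]
  exact List.isChain_map_of_isChain C (fun _ _ => C.valid) p.isChain_adj_support.dropLast

theorem head?_edges_map (hp : IsTailColored c f p) (hnil : ¬ p.Nil) :
    (p.edges.map c).head? = some (f u) := by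
  cases p with
  | nil => exact absurd Walk.Nil.nil hnil
  | cons h p => exact congrArg some (hp ⟨(u, _), h⟩ List.mem_cons_self)

theorem getLast?_edges_map (hp : IsTailColored c f p) (hnil : ¬ p.Nil) :
    (p.edges.map c).getLast? = some (f p.penultimate) := by
  have hedges : p.edges ≠ [] := Walk.edges_eq_nil.not.2 hnil
  rw [List.getLast?_map, List.getLast?_eq_some_getLast hedges,
    Walk.getLast_edges_eq_mk_penultimate_end]
  exact congrArg some (hp (p.lastDart hnil) (p.lastDart_mem_darts hnil))

end IsTailColored

theorem HasStrongProperty.of_isTailColored {k : ℕ} {c : Sym2 V → Fin k} (C : G.Coloring (Fin k))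
    (hc : ∀ u v, ∃ p : G.Walk u v, p.IsPath ∧ IsTailColored c C p) :
    HasStrongProperty G c := by
  intro u v huv
  obtain ⟨p, hp, hpc⟩ := hc u v
  obtain ⟨q, hq, hqc⟩ := hc v u
  have hpnil : ¬ p.Nil := Walk.not_nil_of_ne huv
  have hqnil : ¬ q.Nil := Walk.not_nil_of_ne huv.symm
  refine ⟨p, q.reverse, hp, hpc.isChain_edges_map, hq.reverse, ?_, ?_, ?_⟩
  · rw [Walk.edges_reverse, List.map_reverse]
    exact List.isChain_reverse.2 (hqc.isChain_edges_map.imp fun _ _ => Ne.symm)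
  · rw [Walk.edges_reverse, List.map_reverse, List.head?_reverse,
      hpc.head?_edges_map hpnil, hqc.getLast?_edges_map hqnil]
    simpa using (C.valid (q.adj_penultimate hqnil)).symm
  · rw [Walk.edges_reverse, List.map_reverse, List.getLast?_reverse,
      hqc.head?_edges_map hqnil, hpc.getLast?_edges_map hpnil]
    simpa using C.valid (p.adj_penultimate hpnil)

theorem exists_hasStrongProperty_of_colorable {k : ℕ} (hG : G.IsEdgeConnected 2)
    (hk : G.Colorable k) : ∃ c : Sym2 V → Fin k, HasStrongProperty G c := by
  obtain ⟨C⟩ := hk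
  obtain ⟨D, hadj, hasymm, hstrong⟩ := exists_strong_orientation hG
  obtain ⟨c, hc⟩ := exists_edge_labeling_eq_tail hasymm C
  refine ⟨c, HasStrongProperty.of_isTailColored C fun u v => ?_⟩
  obtain ⟨p, hp, hpD⟩ := exists_isPath_forall_darts hadj (hstrong u v)
  exact ⟨p, hp, fun d hd => hc _ _ (hpD d hd)⟩

end TailColoring

section ProperConnectionNumber

variable {V : Type*} {G : SimpleGraph V} {k : ℕ} {c : Sym2 V → Fin k} {u v : V}

theorem HasStrongProperty.isProperPathColoring (hc : HasStrongProperty G c) :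
    IsProperPathColoring G c := by
  intro u v huv
  obtain ⟨p, -, hp, hchain, -⟩ := hc u v huv
  exact ⟨p, hp, hchain⟩

theorem IsProperPathColoring.two_le_of_not_adj (hc : IsProperPathColoring G c) (huv : u ≠ v)
    (hadj : ¬ G.Adj u v) : 2 ≤ k := by
  by_contra! hk
  have : Subsingleton (Fin k) := Fin.subsingleton_iff_le_one.2 (by omega)
  obtain ⟨p, -, hchain⟩ := hc u v huv
  match p with
  | .nil => exact huv rfl
  | .cons h .nil => exact hadj h
  | .cons _ (.cons _ _) =>
    exact (List.isChain_cons_cons.1 hchain).1 (Subsingleton.elim _ _)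

theorem exists_ne_not_adj_of_isEdgeConnected_two [Nontrivial V] (hbip : G.Colorable 2)
    (hG : G.IsEdgeConnected 2) : ∃ u v, u ≠ v ∧ ¬ G.Adj u v := by
  obtain ⟨C⟩ := hbip
  obtain ⟨s⟩ : Nonempty V := inferInstance
  obtain ⟨u, hu⟩ := (hG.preconnected two_ne_zero).exists_adj_of_nontrivial s
  obtain ⟨v, hv⟩ := (isEdgeConnected_two.1 hG s(s, u)).exists_adj_of_nontrivial s
  rw [deleteEdges_adj] at hv
  refine ⟨u, v, fun h => hv.2 (by simp [h]), fun huv => ?_⟩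
  have hCu : C s ≠ C u := C.valid hu
  have hCv : C s ≠ C v := C.valid hv.1
  have hCuv : C u ≠ C v := C.valid huv
  omega

end ProperConnectionNumber

section VertexConnectivity

variable {V : Type*} {G : SimpleGraph V} {s : Set (Sym2 V)} {u v w : V}

theorem reachable_deleteEdges_of_preconnected_induce_compl
    (hw : (G.induce ({w}ᶜ : Set V)).Preconnected) (hs : ∀ e ∈ s, e ∈ G.edgeSet → w ∈ e)
    (hu : u ≠ w) (hv : v ≠ w) : (G.deleteEdges s).Reachable u v := by
  let inclusion : G.induce ({w}ᶜ : Set V) →g G.deleteEdges s :=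
    { toFun := Subtype.val
      map_rel' := fun {a b} hab => deleteEdges_adj.2 ⟨hab, fun habs => by
        obtain h | h := Sym2.mem_iff.1 (hs _ habs hab)
        exacts [a.2 h.symm, b.2 h.symm]⟩ }
  exact (hw ⟨u, hu⟩ ⟨v, hv⟩).map inclusion

theorem TwoConnected.exists_ne_ne (hG : TwoConnected G) (u v : V) : ∃ w, w ≠ u ∧ w ≠ v := by
  have hfin : Finite V := Nat.finite_of_card_ne_zero (by have := hG.1; omega)
  refine ENat.exists_ne_ne_of_three_le ?_ u v
  rw [ENat.card_eq_coe_natCard]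
  exact_mod_cast hG.1

theorem TwoConnected.nontrivial (hG : TwoConnected G) : Nontrivial V := by
  have hcard : 1 < Nat.card V := lt_of_lt_of_le (by norm_num) hG.1
  have hfin : Finite V := Nat.finite_of_card_ne_zero (by omega)
  exact Finite.one_lt_card_iff_nontrivial.1 hcard

theorem TwoConnected.isEdgeConnected_two (hG : TwoConnected G) : G.IsEdgeConnected 2 := by
  refine SimpleGraph.isEdgeConnected_two.2 fun e u v => ?_
  by_cases he : e ∈ G.edgeSet
  · obtain ⟨x, y⟩ := e
    have hxy : x ≠ y := G.ne_of_adj he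
    have avoiding {w a b : V} (hw : w ∈ s(x, y)) :
        a ≠ w → b ≠ w → (G.deleteEdges {s(x, y)}).Reachable a b :=
      reachable_deleteEdges_of_preconnected_induce_compl (hG.2 w).preconnected
        (by rintro _ rfl _; exact hw)
    obtain ⟨z, hzx, hzy⟩ := hG.exists_ne_ne x y
    have hz (a : V) : (G.deleteEdges {s(x, y)}).Reachable a z := by
      obtain rfl | hax := eq_or_ne a x
      · exact avoiding (Sym2.mem_mk_right a y) hxy hzy
      · exact avoiding (Sym2.mem_mk_left x y) hax hzx
    exact (hz u).trans (hz v).symm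
  · obtain ⟨w, hwu, hwv⟩ := hG.exists_ne_ne u v
    exact reachable_deleteEdges_of_preconnected_induce_compl (hG.2 w).preconnected
      (by rintro _ rfl hmem; exact absurd hmem he) hwu.symm hwv.symm

end VertexConnectivity

theorem pc_bipartite_twoConnected_general {V : Type*} [Nontrivial V] (G : SimpleGraph V)
    (hbip : G.Colorable 2) (h2 : G.IsEdgeConnected 2) :
    pc G = 2 ∧ ∃ c : Sym2 V → Fin 2, IsProperPathColoring G c ∧ HasStrongProperty G c := by
  obtain ⟨c, hc⟩ := exists_hasStrongProperty_of_colorable h2 hbip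
  obtain ⟨u, v, huv, hadj⟩ := exists_ne_not_adj_of_isEdgeConnected_two hbip h2
  refine ⟨le_antisymm (Nat.sInf_le ⟨c, hc.isProperPathColoring⟩) ?_, c, hc.isProperPathColoring, hc⟩
  exact le_csInf ⟨2, c, hc.isProperPathColoring⟩ fun k ⟨_, h⟩ => h.two_le_of_not_adj huv hadj

/-- If `G` is bipartite and 2-connected, then `pc G = 2` and there is a proper-path
2-coloring of `G` with the strong property. -/
theorem pc_bipartite_twoConnected {V : Type*} [Fintype V] (G : SimpleGraph V)
    (hbip : G.Colorable 2) (h2 : TwoConnected G) :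
    pc G = 2 ∧ ∃ c : Sym2 V → Fin 2, IsProperPathColoring G c ∧ HasStrongProperty G c := by
  have := h2.nontrivial
  exact pc_bipartite_twoConnected_general G hbip h2.isEdgeConnected_two
end

section
/- Let G be a simple graph on n ≥ 5 vertices such that both G and its complement Ḡ are connected. Then pc(G) + pc(Ḡ) ≤ n, and equality holds if and only if G ≅ T(2, n−2) or Ḡ ≅ T(2, n−2). -/
open SimpleGraph

/-- The double star `T(2, n-2)` on `n` vertices: the centers `0` (of degree `n-2`) and `1`
(of degree `2`) are adjacent, vertex `2` is the leaf attached to center `1`, and vertices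
`3, …, n-1` are the leaves attached to center `0`. -/
def doubleStarT2 (n : ℕ) : SimpleGraph (Fin n) :=
  SimpleGraph.fromRel (fun x y =>
    (x.val = 0 ∧ y.val = 1) ∨ (x.val = 1 ∧ y.val = 2) ∨ (x.val = 0 ∧ 3 ≤ y.val))

/-!
A tree of maximum degree at most `k ≥ 1` has a proper edge-coloring with `k` colors, so `pc G ≤ k`
as soon as `G` has such a spanning tree. It therefore suffices to find spanning trees of `G` and
`Gᶜ` whose maximum degrees have a small sum, by adding one vertex at a time.

The vertices can be ordered suitably: if `G[S]` and `Gᶜ[S]` are connected and `#S ≥ 5`, they remain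
so after the removal of some `v ∈ S`. Indeed `S` contains an induced `P₄`; take a maximal proper
subset `T ⊇ P₄` on which both graphs are connected. If `T` misses more than one vertex, then by
maximality `T` is a module of `G[S]`, and any vertex of `T` can be removed.

A new vertex `v` is adjacent to at least half of `S` in `G` or in `Gᶜ`. In that graph it can be
added without raising the maximum degree of the tree: a tree of maximum degree at least `3` has a
vertex of smaller degree among the neighbours of `v`, and a Hamiltonian path can absorb `v`. In the
other graph the degree grows by at most one. Hence degree sums below `#S` persist, and only sets on
which `G` or `Gᶜ` is `T(2, #S - 2)` do not have them. In `T(2, n - 2)` the `n - 2` edges at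
the large center are bridges, and bridges at a common vertex need distinct colors.
-/

section InducedConnectivity

variable {V : Type*} {G : SimpleGraph V} {S T A : Set V} {u v w s t : V}

/-- `A` is closed in `G[S]` if no edge of `G[S]` leaves `A`; this expresses connectivity of
induced subgraphs without walks in subtypes. -/
def IsAdjClosedIn (G : SimpleGraph V) (S A : Set V) : Prop :=
  ∀ ⦃x⦄, x ∈ S → x ∈ A → ∀ ⦃y⦄, y ∈ S → G.Adj x y → y ∈ A

lemma preconnected_induce_iff (hw : w ∈ S) :
    (G.induce S).Preconnected ↔ ∀ A, w ∈ A → IsAdjClosedIn G S A → S ⊆ A := by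
  constructor
  · intro hS A hwA hA y hy
    by_contra hyA
    obtain ⟨p⟩ := hS ⟨w, hw⟩ ⟨y, hy⟩
    obtain ⟨d, -, hd, hd'⟩ := p.exists_boundary_dart (Subtype.val ⁻¹' A) hwA hyA
    exact hd' (hA d.fst.2 hd d.snd.2 d.adj)
  · intro h
    have hreach : ∀ y : S, (G.induce S).Reachable ⟨w, hw⟩ y := by
      intro y
      obtain ⟨_, hy⟩ := h {y | ∃ hy : y ∈ S, (G.induce S).Reachable ⟨w, hw⟩ ⟨y, hy⟩}
        ⟨hw, .rfl⟩ (fun x hx ⟨_, hwx⟩ y hy hxy ↦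
          ⟨hy, hwx.trans (Adj.reachable (show (G.induce S).Adj ⟨x, hx⟩ ⟨y, hy⟩ from hxy))⟩) y.2
      exact hy
    exact fun x y ↦ (hreach x).symm.trans (hreach y)

lemma preconnected_induce_insert (hS : (G.induce S).Preconnected) (hu : u ∈ S)
    (huv : G.Adj u v) : (G.induce (insert v S)).Preconnected := by
  rw [preconnected_induce_iff (Set.mem_insert_of_mem v hu)]
  intro A huA hA
  have hSA : S ⊆ A := (preconnected_induce_iff hu).1 hS A huA
    fun x hx hxA y hy ↦ hA (Set.mem_insert_of_mem v hx) hxA (Set.mem_insert_of_mem v hy)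
  exact Set.insert_subset (hA (Set.mem_insert_of_mem v hu) huA (Set.mem_insert v S) huv) hSA

lemma exists_adj_of_preconnected_induce (hS : (G.induce S).Preconnected) (hnt : S.Nontrivial)
    (hv : v ∈ S) : ∃ u ∈ S, G.Adj v u := by
  have := hnt.coe_sort
  obtain ⟨u, hu⟩ := hS.exists_adj_of_nontrivial ⟨v, hv⟩
  exact ⟨u, u.2, hu⟩

lemma preconnected_induce_diff_singleton_of_module (hS : (G.induce S).Preconnected)
    (hTS : T ⊂ S) (hT : ∀ x ∈ S \ T, (∃ y ∈ T, G.Adj x y) → ∀ y ∈ T, G.Adj x y)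
    (hs : s ∈ T) (ht : t ∈ T) (hst : s ≠ t) : (G.induce (S \ {s})).Preconnected := by
  have hnot : ¬ IsAdjClosedIn G S T := fun hcl ↦
    hTS.2 ((preconnected_induce_iff (hTS.1 hs)).1 hS T hs hcl)
  obtain ⟨x, -, hxT, w, hwS, hxw, hwT⟩ :
      ∃ x ∈ S, x ∈ T ∧ ∃ w ∈ S, G.Adj x w ∧ w ∉ T := by
    simpa only [IsAdjClosedIn, not_forall, exists_prop] using hnot
  have hwadj : ∀ y ∈ T, G.Adj w y := hT w ⟨hwS, hwT⟩ ⟨x, hxT, hxw.symm⟩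
  have hws : w ∈ S \ {s} := ⟨hwS, fun h ↦ hwT (h ▸ hs)⟩
  have hmemT : ∀ {y}, y ∈ T → y ≠ s → y ∈ S \ {s} := fun hy hys ↦ ⟨hTS.1 hy, hys⟩
  rw [preconnected_induce_iff hws]
  intro A hwA hA
  have htA : t ∈ A := hA hws hwA (hmemT ht hst.symm) (hwadj t ht)
  have hclosed : IsAdjClosedIn G S (insert s A) := by
    intro y hyS hyA z hzS hyz
    rcases eq_or_ne z s with rfl | hzs
    · exact Set.mem_insert z A
    refine Set.mem_insert_of_mem s ?_
    rcases eq_or_ne y s with rfl | hys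
    · by_cases hzT : z ∈ T
      · exact hA hws hwA (hmemT hzT hzs) (hwadj z hzT)
      · exact hA (hmemT ht hst.symm) htA ⟨hzS, hzs⟩
          (hT z ⟨hzS, hzT⟩ ⟨y, hs, hyz.symm⟩ t ht).symm
    · exact hA ⟨hyS, hys⟩ (hyA.resolve_left hys) ⟨hzS, hzs⟩ hyz
  have hsub : S ⊆ insert s A := (preconnected_induce_iff hwS).1 hS _
    (Set.mem_insert_of_mem s hwA) hclosed
  exact fun y hy ↦ (hsub hy.1).resolve_left hy.2

end InducedConnectivity

/-- Both `G[S]` and its complement `Gᶜ[S]` are connected (or `S` is empty). -/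
def IsCoconnectedOn {V : Type*} (G : SimpleGraph V) (S : Set V) : Prop :=
  (G.induce S).Preconnected ∧ (Gᶜ.induce S).Preconnected

/-- The vertices `a, b, c, d`, in this order, induce a path of `G`; they are then distinct. -/
structure IsInducedP4 {V : Type*} (G : SimpleGraph V) (a b c d : V) : Prop where
  adj_ab : G.Adj a b
  adj_bc : G.Adj b c
  adj_cd : G.Adj c d
  not_adj_ac : ¬ G.Adj a c
  not_adj_bd : ¬ G.Adj b d
  not_adj_ad : ¬ G.Adj a d

section InducedP4

variable {V : Type*} {G : SimpleGraph V} {a b c d u v w : V}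

lemma IsCoconnectedOn.compl {S : Set V} (h : IsCoconnectedOn G S) : IsCoconnectedOn Gᶜ S :=
  ⟨h.2, by rw [compl_compl]; exact h.1⟩

lemma IsCoconnectedOn.insert_of_adj {S : Set V} (h : IsCoconnectedOn G S) (hu : u ∈ S)
    (huv : G.Adj u v) (hw : w ∈ S) (hwv : Gᶜ.Adj w v) : IsCoconnectedOn G (insert v S) :=
  ⟨preconnected_induce_insert h.1 hu huv, preconnected_induce_insert h.2 hw hwv⟩

namespace IsInducedP4

lemma ne_ac (h : IsInducedP4 G a b c d) : a ≠ c :=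
  fun e ↦ h.not_adj_ad (e ▸ h.adj_cd)

lemma ne_ad (h : IsInducedP4 G a b c d) : a ≠ d :=
  fun e ↦ h.not_adj_bd (e ▸ h.adj_ab.symm)

lemma ne_bd (h : IsInducedP4 G a b c d) : b ≠ d :=
  fun e ↦ h.not_adj_ad (e ▸ h.adj_ab)

lemma symm (h : IsInducedP4 G a b c d) : IsInducedP4 G d c b a :=
  ⟨h.adj_cd.symm, h.adj_bc.symm, h.adj_ab.symm, fun e ↦ h.not_adj_bd e.symm,
    fun e ↦ h.not_adj_ac e.symm, fun e ↦ h.not_adj_ad e.symm⟩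

lemma compl (h : IsInducedP4 G a b c d) : IsInducedP4 Gᶜ b d a c where
  adj_ab := ⟨h.ne_bd, h.not_adj_bd⟩
  adj_bc := ⟨h.ne_ad.symm, fun e ↦ h.not_adj_ad e.symm⟩
  adj_cd := ⟨h.ne_ac, h.not_adj_ac⟩
  not_adj_ac := fun e ↦ e.2 h.adj_ab.symm
  not_adj_bd := fun e ↦ e.2 h.adj_cd.symm
  not_adj_ad := fun e ↦ e.2 h.adj_bc

lemma isCoconnectedOn (h : IsInducedP4 G a b c d) : IsCoconnectedOn G {a, b, c, d} := by
  have key : ∀ {H : SimpleGraph V} {a b c d : V}, IsInducedP4 H a b c d →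
      (H.induce {d, c, b, a}).Preconnected := fun h ↦
    preconnected_induce_insert (preconnected_induce_insert (preconnected_induce_insert
      Preconnected.of_subsingleton rfl h.adj_ab) (Set.mem_insert _ _) h.adj_bc)
      (Set.mem_insert _ _) h.adj_cd
  refine ⟨key h.symm, ?_⟩
  have hset : ({a, b, c, d} : Set V) = {c, a, d, b} := by ext; simp; tauto
  exact hset ▸ key h.compl

end IsInducedP4

lemma exists_isInducedP4_of_not_preconnected_diff {S : Set V} (hS : (G.induce S).Preconnected)
    (hv : v ∈ S) (hw : w ∈ S) (hvw : Gᶜ.Adj v w)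
    (hcut : ¬ (G.induce (S \ {v})).Preconnected) :
    ∃ a ∈ S, ∃ b ∈ S, ∃ c ∈ S, ∃ d ∈ S, IsInducedP4 G a b c d := by
  obtain ⟨A, hwA, hA, hsub⟩ :
      ∃ A, w ∈ A ∧ IsAdjClosedIn G (S \ {v}) A ∧ ¬ S \ {v} ⊆ A := by
    simpa only [preconnected_induce_iff (show w ∈ S \ {v} from ⟨hw, hvw.ne.symm⟩), not_forall,
      exists_prop] using hcut
  have hleave : ∀ (B : Set V) (w : V), w ∈ S → w ∈ B → v ∉ B →
      ∃ x ∈ S, x ∈ B ∧ ∃ y ∈ S, G.Adj x y ∧ y ∉ B := by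
    intro B w hw hwB hvB
    by_contra! hB
    exact hvB ((preconnected_induce_iff hw).1 hS B hwB
      (fun x hx hxB y hy hxy ↦ hB x hx hxB y hy hxy) hv)
  obtain ⟨z₀, ⟨hz₀, hz₀v⟩, hz₀A⟩ := Set.not_subset.1 hsub
  obtain ⟨z, hz, ⟨hzA, hzv⟩, z', hz', hzz', hz'B⟩ :=
    hleave {z | z ∉ A ∧ z ≠ v} z₀ hz₀ ⟨hz₀A, hz₀v⟩ (fun h ↦ h.2 rfl)
  have hvz : G.Adj v z := by
    have hz'v : z' = v := by
      by_contra hne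
      exact hzA (hA ⟨hz', hne⟩ (by_contra fun h ↦ hz'B ⟨h, hne⟩) ⟨hz, hzv⟩ hzz'.symm)
    exact hz'v ▸ hzz'.symm
  obtain ⟨x, hx, ⟨hxA, hxv, hvx⟩, y, hy, hxy, hyB⟩ :=
    hleave {x | x ∈ A ∧ x ≠ v ∧ ¬ G.Adj v x} w hw ⟨hwA, hvw.ne.symm, hvw.2⟩ (fun h ↦ h.2.1 rfl)
  have hyv : y ≠ v := fun h ↦ hvx (h ▸ hxy.symm)
  have hyA : y ∈ A := hA ⟨hx, hxv⟩ hxA ⟨hy, hyv⟩ hxy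
  have hvy : G.Adj v y := by_contra fun h ↦ hyB ⟨hyA, hyv, h⟩
  exact ⟨x, hx, y, hy, v, hv, z, hz, hxy, hvy.symm, hvz, fun h ↦ hvx h.symm,
    fun h ↦ hzA (hA ⟨hy, hyv⟩ hyA ⟨hz, hzv⟩ h), fun h ↦ hzA (hA ⟨hx, hxv⟩ hxA ⟨hz, hzv⟩ h)⟩

lemma IsCoconnectedOn.exists_isInducedP4 {S : Finset V} (h : IsCoconnectedOn G S)
    (hnt : S.Nontrivial) : ∃ a ∈ S, ∃ b ∈ S, ∃ c ∈ S, ∃ d ∈ S, IsInducedP4 G a b c d := by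
  classical
  induction S using Finset.strongInduction with
  | H S ih =>
    obtain ⟨v, hv⟩ := hnt.nonempty
    obtain ⟨x, hx, hvx⟩ := exists_adj_of_preconnected_induce h.1 hnt hv
    obtain ⟨y, hy, hvy⟩ := exists_adj_of_preconnected_induce h.2 hnt hv
    by_cases hG : (G.induce ((S : Set V) \ {v})).Preconnected
    · by_cases hGc : (Gᶜ.induce ((S : Set V) \ {v})).Preconnected
      · have hxy : x ≠ y := fun e ↦ hvy.2 (e ▸ hvx)
        obtain ⟨a, ha, b, hb, c, hc, d, hd, habcd⟩ := ih (S.erase v) (Finset.erase_ssubset hv)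
          (by rw [Finset.coe_erase]; exact ⟨hG, hGc⟩)
          ⟨x, by simp_all [hvx.ne.symm], y, by simp_all [hvy.ne.symm], hxy⟩
        exact ⟨a, Finset.mem_of_mem_erase ha, b, Finset.mem_of_mem_erase hb,
          c, Finset.mem_of_mem_erase hc, d, Finset.mem_of_mem_erase hd, habcd⟩
      · obtain ⟨a, ha, b, hb, c, hc, d, hd, habcd⟩ :=
          exists_isInducedP4_of_not_preconnected_diff h.2 hv hx (by rwa [compl_compl]) hGc
        exact ⟨b, hb, d, hd, a, ha, c, hc, compl_compl G ▸ habcd.compl⟩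
    · exact exists_isInducedP4_of_not_preconnected_diff h.1 hv hy hvy hG

lemma IsCoconnectedOn.exists_eq_insert_or_forall_not_compl_adj [DecidableEq V] {P S : Finset V}
    (h : IsCoconnectedOn G P) (hPS : P ⊂ S) :
    (∃ v T, v ∉ T ∧ S = insert v T ∧ IsCoconnectedOn G T) ∨
      ∃ T, P ⊆ T ∧ T ⊂ S ∧ ∀ v ∈ S \ T, ∀ x ∈ T, G.Adj v x → ∀ y ∈ T, ¬ Gᶜ.Adj v y := by
  have hfin : {T : Finset V | T ⊂ S ∧ IsCoconnectedOn G T}.Finite :=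
    S.powerset.finite_toSet.subset fun T hT ↦ Finset.mem_coe.2 (Finset.mem_powerset.2 hT.1.1)
  obtain ⟨T, hPT, ⟨hTS, hT⟩, hmax⟩ := hfin.exists_le_maximal ⟨hPS, h⟩
  by_cases hone : ∃ v, v ∉ T ∧ S = insert v T
  · obtain ⟨v, hvT, hS⟩ := hone
    exact .inl ⟨v, T, hvT, hS, hT⟩
  refine .inr ⟨T, hPT, hTS, fun v hv x hx hvx y hy hvy ↦ ?_⟩
  obtain ⟨hvS, hvT⟩ := Finset.mem_sdiff.1 hv
  have hins : insert v T ⊂ S := Finset.ssubset_iff_subset_ne.2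
    ⟨Finset.insert_subset hvS hTS.1, fun e ↦ hone ⟨v, hvT, e.symm⟩⟩
  have hco : IsCoconnectedOn G (insert v T : Finset V) := by
    simpa using hT.insert_of_adj hx hvx.symm hy hvy.symm
  exact hvT (hmax ⟨hins, hco⟩ (Finset.subset_insert v T) (Finset.mem_insert_self v T))

lemma IsCoconnectedOn.exists_erase [DecidableEq V] {S : Finset V} (h : IsCoconnectedOn G S)
    (hcard : 5 ≤ S.card) : ∃ v ∈ S, IsCoconnectedOn G (S.erase v : Finset V) := by
  obtain ⟨a, ha, b, hb, c, hc, d, hd, hP⟩ :=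
    h.exists_isInducedP4 (Finset.one_lt_card_iff_nontrivial.1 (by lia))
  have hPS : {a, b, c, d} ⊂ S := by
    refine Finset.ssubset_iff_subset_ne.2 ⟨by grind, ?_⟩
    rintro rfl
    exact absurd hcard (by have := Finset.card_le_four (a := a) (b := b) (c := c) (d := d); lia)
  have hPco : IsCoconnectedOn G ({a, b, c, d} : Finset V) := by simpa using hP.isCoconnectedOn
  rcases hPco.exists_eq_insert_or_forall_not_compl_adj hPS with
    ⟨v, T, hvT, rfl, hT⟩ | ⟨T, hPT, hTS, hunsplit⟩
  · exact ⟨v, Finset.mem_insert_self v T, by rwa [Finset.erase_insert hvT]⟩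
  have haT : a ∈ T := hPT (by simp)
  have hbT : b ∈ T := hPT (by simp)
  have hTS' : (T : Set V) ⊂ S := Finset.coe_ssubset.2 hTS
  have hne : ∀ x ∈ (S : Set V) \ T, ∀ y ∈ (T : Set V), x ≠ y := fun x hx y hy e ↦ hx.2 (e ▸ hy)
  refine ⟨a, hTS.1 haT, ?_⟩
  rw [Finset.coe_erase]
  refine ⟨preconnected_induce_diff_singleton_of_module h.1 hTS' ?_ haT hbT hP.adj_ab.ne,
    preconnected_induce_diff_singleton_of_module h.2 hTS' ?_ haT hbT hP.adj_ab.ne⟩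
  · rintro x hx ⟨z, hz, hxz⟩ y hy
    exact by_contra fun hxy ↦ hunsplit x (by simpa using hx) z hz hxz y hy ⟨hne x hx y hy, hxy⟩
  · rintro x hx ⟨z, hz, hxz⟩ y hy
    exact ⟨hne x hx y hy, fun hxy ↦ hunsplit x (by simpa using hx) y hy hxy z hz hxz⟩

end InducedP4

/-- `TreeDegrees G S d` means that `G` has a subtree with vertex set `S` in which every `x ∈ S`
has degree `d x`. Such a tree is recorded by building it one leaf at a time; `d` vanishes off
`S`. -/
inductive TreeDegrees {V : Type*} [DecidableEq V] (G : SimpleGraph V) :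
    Finset V → (V → ℕ) → Prop
  | singleton (v : V) : TreeDegrees G {v} 0
  | attach {S : Finset V} {d : V → ℕ} {u v : V} (h : TreeDegrees G S d) (hu : u ∈ S)
      (hv : v ∉ S) (huv : G.Adj u v) :
      TreeDegrees G (insert v S) (d + Pi.single u 1 + Pi.single v 1)

/-- `G` has a subtree with vertex set `S` and maximum degree at most `k`. -/
def HasSpanningTree {V : Type*} [DecidableEq V] (G : SimpleGraph V) (S : Finset V) (k : ℕ) :
    Prop :=
  ∃ d, TreeDegrees G S d ∧ ∀ x, d x ≤ k

/- If no two consecutive entries of `t` are neighbours of `v`, then the bound on their number forces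
the last entry of `t` to be one. -/
lemma exists_isChain_cons_insert {V : Type*} {G : SimpleGraph V} [DecidableRel G.Adj] {a v : V}
    {t : List V} (hchain : (a :: t).IsChain G.Adj)
    (hcount : t.length < 2 * t.countP (G.Adj v ·)) :
    ∃ t', (a :: t').Perm (v :: a :: t) ∧ (a :: t').IsChain G.Adj := by
  match t with
  | [] => simp at hcount
  | [b] =>
    have hvb : G.Adj v b := by
      by_contra hvb
      simp [hvb] at hcount
    refine ⟨[b, v], ?_, ?_⟩
    · exact (List.perm_append_comm (l₁ := [a, b]) (l₂ := [v]))
    · simpa [hvb.symm] using hchain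
  | b :: c :: t =>
    obtain ⟨hab, hchain⟩ := List.isChain_cons_cons.1 hchain
    by_cases hvb : G.Adj v b
    · by_cases hvc : G.Adj v c
      · exact ⟨b :: v :: c :: t, (List.perm_append_comm (l₁ := [a, b]) (l₂ := [v])).append_right _,
          by simp_all [hvb.symm]⟩
      · obtain ⟨hbc, hchain⟩ := List.isChain_cons_cons.1 hchain
        have hcount' : t.length + 1 + 1 < 2 * (t.countP (G.Adj v ·) + 1) := by
          simpa [List.countP_cons, hvb, hvc] using hcount
        obtain ⟨t', hperm, hchain'⟩ := exists_isChain_cons_insert (v := v) hchain (by lia)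
        exact ⟨b :: c :: t', ((hperm.cons b).cons a).trans
          ((List.perm_append_comm (l₁ := [a, b]) (l₂ := [v])).append_right _),
          by simp_all⟩
    · have hcount' : t.length + 1 + 1 < 2 * (c :: t).countP (G.Adj v ·) := by
        rwa [List.countP_cons_of_neg (by simpa using hvb)] at hcount
      obtain ⟨t', hperm, hchain'⟩ :=
        exists_isChain_cons_insert (v := v) hchain (Nat.lt_of_succ_lt hcount')
      exact ⟨b :: t', (hperm.cons a).trans (List.Perm.swap v a _), by simp_all⟩

section Trees

variable {V : Type*} [DecidableEq V] {G : SimpleGraph V} {S T N W : Finset V} {d : V → ℕ}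
  {k m : ℕ} {u v o : V}

namespace TreeDegrees

lemma eq_zero_of_notMem (h : TreeDegrees G S d) : ∀ x ∉ S, d x = 0 := by
  induction h with
  | singleton v => simp
  | @attach S d u v _ hu _ _ ih =>
    intro x hx
    rw [Finset.mem_insert, not_or] at hx
    have hxu : x ≠ u := fun e ↦ hx.2 (e ▸ hu)
    simp [ih x hx.2, hx.1, hxu]

lemma sum_add_two (h : TreeDegrees G S d) : ∑ x ∈ S, d x + 2 = 2 * S.card := by
  induction h with
  | singleton v => simp
  | @attach S d u v h hu hv huv ih =>
    have hsum : ∑ x ∈ S, (Pi.single u 1 : V → ℕ) x = 1 := by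
      rw [Finset.sum_pi_single', if_pos hu]
    have hsum' : ∑ x ∈ S, (Pi.single v 1 : V → ℕ) x = 0 := by
      rw [Finset.sum_pi_single', if_neg hv]
    have hvu : (Pi.single u 1 : V → ℕ) v = 0 := Pi.single_eq_of_ne huv.ne.symm 1
    simp only [Finset.sum_insert hv, Finset.card_insert_of_notMem hv, Pi.add_apply,
      Finset.sum_add_distrib, hsum, hsum', hvu, Pi.single_eq_same, h.eq_zero_of_notMem v hv]
    lia

lemma one_le (h : TreeDegrees G S d) (hS : 2 ≤ S.card) : ∀ x ∈ S, 1 ≤ d x := by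
  induction h with
  | singleton v => simp at hS
  | @attach S d u v _ hu hv huv ih =>
    intro x hx
    rcases Finset.mem_insert.1 hx with rfl | hxS
    · simp
    rcases eq_or_ne x u with rfl | hxu
    · exact (Nat.le_add_left 1 (d x)).trans (by simp)
    have : 1 ≤ d x := ih (Finset.one_lt_card.2 ⟨x, hxS, u, hu, hxu⟩) x hxS
    exact this.trans (by simp [add_assoc])

lemma hasSpanningTree_insert (h : TreeDegrees G S d) (hd : ∀ x, d x ≤ k) (hu : u ∈ S)
    (hv : v ∉ S) (huv : G.Adj u v) (hum : d u + 1 ≤ m) (hkm : k ≤ m) :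
    HasSpanningTree G (insert v S) m := by
  refine ⟨_, h.attach hu hv huv, fun x ↦ ?_⟩
  have hdx := hd x
  rcases eq_or_ne x v with rfl | hxv
  · simpa [h.eq_zero_of_notMem x hv, huv.ne.symm] using Nat.one_le_of_lt hum
  · rcases eq_or_ne x u with rfl | hxu
    · simpa [hxv] using hum
    · simpa [hxv, hxu] using hdx.trans hkm

lemma exists_union_star (h : TreeDegrees G S d) (ho : o ∈ S) (hdisj : Disjoint S W)
    (hW : ∀ x ∈ W, G.Adj o x) :
    ∃ d', TreeDegrees G (S ∪ W) d' ∧ d' o = d o + W.card ∧ ∀ x ≠ o, d' x ≤ max (d x) 1 := by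
  induction W using Finset.induction_on with
  | empty => exact ⟨d, by simpa using h, by simp, fun x _ ↦ le_max_left _ _⟩
  | insert v W hvW ih =>
    rw [Finset.disjoint_insert_right] at hdisj
    obtain ⟨d', h', ho', hd'⟩ := ih hdisj.2 fun x hx ↦ hW x (Finset.mem_insert_of_mem hx)
    have hov : G.Adj o v := hW v (Finset.mem_insert_self v W)
    have hv : v ∉ S ∪ W := by simp [hdisj.1, hvW]
    refine ⟨_, Finset.union_insert v S W ▸ h'.attach (Finset.mem_union_left W ho) hv hov, ?_, ?_⟩
    · simp [hov.ne, ho', Finset.card_insert_of_notMem hvW, add_assoc]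
    · intro x hxo
      rcases eq_or_ne x v with rfl | hxv
      · simp [h'.eq_zero_of_notMem x hv, hxo]
      · simpa [hxo, hxv] using hd' x hxo

end TreeDegrees

lemma exists_treeDegrees_of_isChain {a : V} {t : List V} (hchain : (a :: t).IsChain G.Adj)
    (hnodup : (a :: t).Nodup) :
    ∃ d, TreeDegrees G (a :: t).toFinset d ∧ (∀ x, d x ≤ 2) ∧ d a ≤ 1 := by
  induction t generalizing a with
  | nil => exact ⟨0, TreeDegrees.singleton a, by simp, by simp⟩
  | cons b t ih =>
    obtain ⟨hab, hchain⟩ := List.isChain_cons_cons.1 hchain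
    obtain ⟨ha, hnodup⟩ := List.nodup_cons.1 hnodup
    obtain ⟨d, h, hd, hdb⟩ := ih hchain hnodup
    have haS : a ∉ (b :: t).toFinset := by simpa using ha
    have hda : d a = 0 := h.eq_zero_of_notMem a haS
    refine ⟨_, by rw [List.toFinset_cons]; exact h.attach (by simp) haS hab.symm,
      fun x ↦ ?_, ?_⟩
    · rcases eq_or_ne x a with rfl | hxa
      · simp [hda, hab.ne]
      rcases eq_or_ne x b with rfl | hxb
      · simp [hxa, hdb]
      · simpa [hxa, hxb] using hd x
    · simp [hda, hab.ne]

lemma hasSpanningTree_of_isChain {l : List V} (hne : l ≠ []) (hchain : l.IsChain G.Adj)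
    (hnodup : l.Nodup) : HasSpanningTree G l.toFinset 2 := by
  obtain ⟨a, t, rfl⟩ := List.exists_cons_of_ne_nil hne
  obtain ⟨d, h, hd, -⟩ := exists_treeDegrees_of_isChain hchain hnodup
  exact ⟨d, h, hd⟩

lemma TreeDegrees.exists_isChain (h : TreeDegrees G S d) (hd : ∀ x, d x ≤ 2) :
    ∃ l : List V, l.IsChain G.Adj ∧ l.Nodup ∧ l.toFinset = S ∧
      ∃ a b, l.head? = some a ∧ l.getLast? = some b ∧
        ∀ x ∈ S, 2 ≤ (d + Pi.single a 1 + Pi.single b 1 : V → ℕ) x := by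
  induction h with
  | singleton v => exact ⟨[v], by simp, by simp, rfl, v, v, by simp⟩
  | @attach S d u v _ hu hv huv ih =>
    have hle : ∀ x, d x + (Pi.single u 1 : V → ℕ) x ≤ 2 := fun x ↦
      le_trans (Nat.le_add_right _ _) (hd x)
    obtain ⟨l, hchain, hnodup, hl, b, hhead, hlast, hdeg⟩ :
        ∃ l : List V, l.IsChain G.Adj ∧ l.Nodup ∧ l.toFinset = S ∧
          ∃ b, l.head? = some u ∧ l.getLast? = some b ∧
            ∀ x ∈ S, 2 ≤ (d + Pi.single u 1 + Pi.single b 1 : V → ℕ) x := by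
      obtain ⟨l, hchain, hnodup, hl, a, b, hhead, hlast, hdeg⟩ :=
        ih fun x ↦ (Nat.le_add_right _ _).trans (hle x)
      have hend : u = a ∨ u = b := by
        by_contra! hne
        have h2 := hdeg u hu
        have h1 := hle u
        simp only [Pi.add_apply, Pi.single_eq_same, Pi.single_eq_of_ne hne.1,
          Pi.single_eq_of_ne hne.2] at h1 h2
        lia
      rcases hend with rfl | rfl
      · exact ⟨l, hchain, hnodup, hl, b, hhead, hlast, hdeg⟩
      · refine ⟨l.reverse, List.isChain_reverse.2 (hchain.imp fun _ _ ↦ Adj.symm), by simpa,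
          by simpa, a, by simpa, by simpa, fun x hx ↦ ?_⟩
        rw [add_right_comm]
        exact hdeg x hx
    refine ⟨v :: l, ?_, ?_, by simp [hl], v, b, rfl, ?_, ?_⟩
    · exact List.isChain_cons.2 ⟨by simpa [hhead] using huv.symm, hchain⟩
    · exact List.nodup_cons.2 ⟨by rwa [← List.mem_toFinset, hl], hnodup⟩
    · simp [List.getLast?_cons, hlast]
    · intro x hx
      rcases Finset.mem_insert.1 hx with rfl | hxS
      · simp only [Pi.add_apply, Pi.single_eq_same]
        lia
      · have := hdeg x hxS
        simp only [Pi.add_apply] at this ⊢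
        lia

lemma HasSpanningTree.insert_of_card_two (h : HasSpanningTree G S 2) (hv : v ∉ S) (hN : N ⊆ S)
    (hvN : ∀ x ∈ N, G.Adj v x) (hcard : S.card ≤ 2 * N.card) :
    HasSpanningTree G (insert v S) 2 := by
  classical
  obtain ⟨d, htree, hd⟩ := h
  obtain ⟨l, hchain, hnodup, rfl, a, -, hhead, -⟩ := htree.exists_isChain hd
  obtain ⟨t, rfl⟩ := List.head?_eq_some_iff.1 hhead
  rw [List.mem_toFinset] at hv
  obtain ⟨l, hperm, hchain⟩ : ∃ l : List V, l.Perm (v :: a :: t) ∧ l.IsChain G.Adj := by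
    by_cases hva : G.Adj v a
    · exact ⟨v :: a :: t, .refl _, List.isChain_cons_cons.2 ⟨hva, hchain⟩⟩
    have hNt : N ⊆ (t.filter (G.Adj v ·)).toFinset := fun x hx ↦ by
      have hxa : x ≠ a := fun e ↦ hva (e ▸ hvN x hx)
      simpa [hvN x hx, hxa] using hN hx
    have hNcount : N.card ≤ t.countP (G.Adj v ·) := by
      rw [List.countP_eq_length_filter]
      exact (Finset.card_le_card hNt).trans (List.toFinset_card_le _)
    rw [List.toFinset_card_of_nodup hnodup, List.length_cons] at hcard
    obtain ⟨t', hperm, hchain'⟩ := exists_isChain_cons_insert (v := v) hchain (by lia)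
    exact ⟨a :: t', hperm, hchain'⟩
  rw [← List.toFinset_cons, ← List.toFinset_eq_of_perm _ _ hperm]
  exact hasSpanningTree_of_isChain (fun e ↦ by simp [e] at hperm) hchain
    (hperm.nodup_iff.2 (List.nodup_cons.2 ⟨hv, hnodup⟩))

lemma HasSpanningTree.insert_of_card_three_le (h : HasSpanningTree G S k) (hk : 3 ≤ k)
    (hS : 2 ≤ S.card) (hv : v ∉ S) (hN : N ⊆ S) (hvN : ∀ x ∈ N, G.Adj v x)
    (hcard : S.card ≤ 2 * N.card) : HasSpanningTree G (insert v S) k := by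
  obtain ⟨d, htree, hd⟩ := h
  by_cases hfree : ∃ u ∈ N, d u + 1 ≤ k
  · obtain ⟨u, hu, huk⟩ := hfree
    exact htree.hasSpanningTree_insert hd (hN hu) hv (hvN u hu).symm huk le_rfl
  have hfull : 3 * N.card ≤ ∑ x ∈ N, d x := by
    rw [mul_comm]
    exact Finset.card_nsmul_le_sum N d 3 fun x hx ↦ by
      have : ¬ d x + 1 ≤ k := fun hxk ↦ hfree ⟨x, hx, hxk⟩
      lia
  have hrest : (S \ N).card ≤ ∑ x ∈ S \ N, d x := by
    simpa using Finset.card_nsmul_le_sum (S \ N) d 1 fun x hx ↦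
      htree.one_le hS x (Finset.sdiff_subset hx)
  have hsum := htree.sum_add_two
  have hsplit := Finset.sum_sdiff (f := d) hN
  have hcardsplit := Finset.card_sdiff_add_card_eq_card hN
  lia

lemma HasSpanningTree.insert_of_card (h : HasSpanningTree G S k) (hk : 2 ≤ k)
    (hS : 2 ≤ S.card) (hv : v ∉ S) (hN : N ⊆ S) (hvN : ∀ x ∈ N, G.Adj v x)
    (hcard : S.card ≤ 2 * N.card) : HasSpanningTree G (insert v S) k := by
  rcases hk.eq_or_lt with rfl | hk
  · exact h.insert_of_card_two hv hN hvN hcard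
  · exact h.insert_of_card_three_le hk hS hv hN hvN hcard

lemma HasSpanningTree.insert_succ (h : HasSpanningTree G S k) (hu : u ∈ S) (hv : v ∉ S)
    (huv : G.Adj u v) : HasSpanningTree G (insert v S) (k + 1) := by
  obtain ⟨d, htree, hd⟩ := h
  exact htree.hasSpanningTree_insert hd hu hv huv (Nat.succ_le_succ (hd u)) k.le_succ

lemma HasSpanningTree.union_of_dense (h : HasSpanningTree G S k) (hk : 2 ≤ k) (hS : 2 ≤ S.card)
    (hN : 2 * N.card ≤ S.card)
    (hW : ∀ x ∈ W, ∀ y ∈ S ∪ W, y ≠ x → y ∉ N → G.Adj x y) : HasSpanningTree G (S ∪ W) k := by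
  induction W using Finset.induction_on with
  | empty => simpa using h
  | insert v W _ ih =>
    have hmem : ∀ y ∈ S ∪ W, y ∈ S ∪ insert v W := fun y hy ↦ by
      rw [Finset.union_insert]
      exact Finset.mem_insert_of_mem hy
    have hind : HasSpanningTree G (S ∪ W) k := ih fun x hx y hy ↦
      hW x (Finset.mem_insert_of_mem hx) y (hmem y hy)
    rw [Finset.union_insert]
    by_cases hv : v ∈ S ∪ W
    · rwa [Finset.insert_eq_self.2 hv]
    have hle : S.card ≤ (S ∪ W).card := Finset.card_le_card Finset.subset_union_left
    refine hind.insert_of_card hk (hS.trans hle) hv (N := (S ∪ W) \ N) Finset.sdiff_subset ?_ ?_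
    · intro x hx
      obtain ⟨hx, hxN⟩ := Finset.mem_sdiff.1 hx
      exact hW v (Finset.mem_insert_self v W) x (hmem x hx) (fun e ↦ hv (e ▸ hx)) hxN
    · have := Finset.le_card_sdiff N (S ∪ W)
      lia

lemma hasSpanningTree_two_of_isChain_of_dense {l : List V} (hchain : l.IsChain G.Adj)
    (hnodup : l.Nodup) (hlT : l.toFinset ⊆ T) (hl : 2 ≤ l.length) (hN : 2 * N.card ≤ l.length)
    (hdense : ∀ x ∈ T, x ∉ l → ∀ y ∈ T, y ≠ x → y ∉ N → G.Adj x y) : HasSpanningTree G T 2 := by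
  have hcard : l.toFinset.card = l.length := List.toFinset_card_of_nodup hnodup
  rw [← Finset.union_sdiff_of_subset hlT]
  refine (hasSpanningTree_of_isChain (by rintro rfl; simp at hl) hchain hnodup).union_of_dense
    le_rfl (by lia) (hcard ▸ hN) ?_
  rw [Finset.union_sdiff_of_subset hlT]
  intro x hx
  obtain ⟨hxT, hxl⟩ := Finset.mem_sdiff.1 hx
  exact hdense x hxT (by simpa using hxl)

lemma exists_treeDegrees_of_isChain_of_star {t : List V} (hchain : (o :: t).IsChain G.Adj)
    (hnodup : (o :: t).Nodup) (htS : (o :: t).toFinset ⊆ S)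
    (hstar : ∀ x ∈ S, x ∉ o :: t → G.Adj o x) :
    ∃ d, TreeDegrees G S d ∧ d o + t.length ≤ S.card ∧ ∀ x ≠ o, d x ≤ 2 := by
  obtain ⟨d, h, hd, hdo⟩ := exists_treeDegrees_of_isChain hchain hnodup
  obtain ⟨d', h', hdo', hd'⟩ := h.exists_union_star (o := o) (W := S \ (o :: t).toFinset) (by simp)
    Finset.disjoint_sdiff fun x hx ↦ by
      obtain ⟨hxS, hxt⟩ := Finset.mem_sdiff.1 hx
      exact hstar x hxS (by simpa using hxt)
  rw [Finset.union_sdiff_of_subset htS] at h'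
  refine ⟨d', h', ?_, fun x hx ↦ (hd' x hx).trans (max_le (hd x) one_le_two)⟩
  have hcard := Finset.card_sdiff_add_card_eq_card htS
  rw [List.toFinset_card_of_nodup hnodup, List.length_cons] at hcard
  lia

end Trees

/-- `G[S]` is the double star `T(2, #S - 2)` with center `o` of degree `#S - 2`, center `a` of
degree `2`, and `b` the leaf at `a`; all further vertices of `S` are leaves at `o`. -/
structure IsDoubleStar {V : Type*} (G : SimpleGraph V) (S : Finset V) (o a b : V) : Prop where
  o_mem : o ∈ S
  a_mem : a ∈ S
  b_mem : b ∈ S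
  ne_oa : o ≠ a
  ne_ob : o ≠ b
  ne_ab : a ≠ b
  adj_iff : ∀ x ∈ S, ∀ y ∈ S, G.Adj x y ↔
    x ≠ y ∧ ((x = o ∧ y ≠ b) ∨ (x = a ∧ y = b) ∨ (y = o ∧ x ≠ b) ∨ (y = a ∧ x = b))

/-- `G` and `Gᶜ` have subtrees with vertex set `S` whose maximum degrees have admissible upper
bounds with sum less than `#S`. A bound below `2` is not admissible since it is not preserved when
the trees are extended. -/
def HasSmallTreePair {V : Type*} [DecidableEq V] (G : SimpleGraph V) (S : Finset V) : Prop :=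
  ∃ k l, 2 ≤ k ∧ 2 ≤ l ∧ HasSpanningTree G S k ∧ HasSpanningTree Gᶜ S l ∧ k + l < S.card

lemma exists_mem_ne_of_five_le_card {V : Type*} {S : Finset V} (hS : 5 ≤ S.card) (a b c d : V) :
    ∃ x ∈ S, x ≠ a ∧ x ≠ b ∧ x ≠ c ∧ x ≠ d := by
  classical
  obtain ⟨x, hx, hxnot⟩ := Finset.exists_mem_notMem_of_card_lt_card
    ((Finset.card_le_four (a := a) (b := b) (c := c) (d := d)).trans_lt hS)
  simp only [Finset.mem_insert, Finset.mem_singleton, not_or] at hxnot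
  exact ⟨x, hx, hxnot⟩

section DoubleStar

variable {V : Type*} {G : SimpleGraph V} {S : Finset V} {a b c d o u v w x y : V}

namespace IsDoubleStar

lemma adj_o (h : IsDoubleStar G S o a b) (hx : x ∈ S) (hxo : x ≠ o) (hxb : x ≠ b) : G.Adj o x :=
  (h.adj_iff o h.o_mem x hx).2 ⟨hxo.symm, .inl ⟨rfl, hxb⟩⟩

lemma adj_ab (h : IsDoubleStar G S o a b) : G.Adj a b :=
  (h.adj_iff a h.a_mem b h.b_mem).2 ⟨h.ne_ab, .inr (.inl ⟨rfl, rfl⟩)⟩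

lemma compl_adj_ob (h : IsDoubleStar G S o a b) : Gᶜ.Adj o b :=
  ⟨h.ne_ob, fun hadj ↦ by
    have := h.ne_oa
    have := (h.adj_iff o h.o_mem b h.b_mem).1 hadj
    tauto⟩

lemma compl_adj_of_leaf (h : IsDoubleStar G S o a b) (hx : x ∈ S) (hxo : x ≠ o) (hxa : x ≠ a)
    (hxb : x ≠ b) (hy : y ∈ S) (hyx : y ≠ x) (hyo : y ≠ o) : Gᶜ.Adj x y :=
  ⟨hyx.symm, fun hadj ↦ by
    have := (h.adj_iff x hx y hy).1 hadj
    tauto⟩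

variable [DecidableEq V]

lemma exists_treeDegrees (h : IsDoubleStar G S o a b) :
    ∃ d, TreeDegrees G S d ∧ d o + 2 ≤ S.card ∧ ∀ x ≠ o, d x ≤ 2 := by
  have hchain : [o, a, b].IsChain G.Adj := by
    simp [h.adj_o h.a_mem h.ne_oa.symm h.ne_ab, h.adj_ab]
  refine exists_treeDegrees_of_isChain_of_star hchain
    (by simp [h.ne_oa, h.ne_ob, h.ne_ab]) ?_ fun x hx hxl ↦ ?_
  · simp [Finset.insert_subset_iff, h.o_mem, h.a_mem, h.b_mem]
  · simp only [List.mem_cons, List.not_mem_nil, or_false, not_or] at hxl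
    exact h.adj_o hx hxl.1 hxl.2.2

lemma hasSpanningTree_compl (h : IsDoubleStar G S o a b) (hcard : 5 ≤ S.card) :
    HasSpanningTree Gᶜ S 2 := by
  obtain ⟨l, hl, hlo, hla, hlb, -⟩ := exists_mem_ne_of_five_le_card hcard o a b o
  have hleaf : ∀ y ∈ S, y ≠ l → y ≠ o → Gᶜ.Adj l y := fun y ↦ h.compl_adj_of_leaf hl hlo hla hlb
  have hchain : [o, b, l, a].IsChain Gᶜ.Adj := by
    simp [-compl_adj, h.compl_adj_ob, (hleaf b h.b_mem hlb.symm h.ne_ob.symm).symm,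
      hleaf a h.a_mem hla.symm h.ne_oa.symm]
  refine hasSpanningTree_two_of_isChain_of_dense (N := {o}) hchain ?_ ?_ (by simp) (by simp) ?_
  · simp [h.ne_oa, h.ne_ob, h.ne_ab.symm, hlo.symm, hlb.symm, hla]
  · simp [Finset.insert_subset_iff, h.o_mem, h.a_mem, h.b_mem, hl]
  · intro x hx hxl y hy hyx hyo
    simp only [List.mem_cons, List.not_mem_nil, or_false, not_or] at hxl
    exact h.compl_adj_of_leaf hx hxl.1 hxl.2.2.2 hxl.2.1 hy hyx (by simpa using hyo)

lemma exists_isChain_compl_insert (h : IsDoubleStar G S o a b) (hcard : 5 ≤ S.card) (hv : v ∉ S)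
    (hw : w ∈ S) (hwb : w ≠ b) (hvw : Gᶜ.Adj v w) :
    ∃ l : List V, l.IsChain Gᶜ.Adj ∧ l.Nodup ∧ (∀ x ∈ l, x ∈ insert v S) ∧ 4 ≤ l.length ∧
      v ∈ l ∧ o ∈ l ∧ a ∈ l ∧ b ∈ l := by
  obtain ⟨l, hl, hlo, hla, hlb, hlw⟩ := exists_mem_ne_of_five_le_card hcard o a b w
  have hleaf : ∀ y ∈ S, y ≠ l → y ≠ o → Gᶜ.Adj l y := fun y ↦ h.compl_adj_of_leaf hl hlo hla hlb
  have hob : Gᶜ.Adj o b := h.compl_adj_ob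
  have hbl : Gᶜ.Adj b l := (hleaf b h.b_mem hlb.symm h.ne_ob.symm).symm
  have hla' : Gᶜ.Adj l a := hleaf a h.a_mem hla.symm h.ne_oa.symm
  have hmem : o ∈ S ∧ a ∈ S ∧ b ∈ S := ⟨h.o_mem, h.a_mem, h.b_mem⟩
  have hne : o ≠ a ∧ o ≠ b ∧ a ≠ b := ⟨h.ne_oa, h.ne_ob, h.ne_ab⟩
  rcases eq_or_ne w o with rfl | hwo
  · refine ⟨[v, w, b, l, a], by simp [-compl_adj, *], ?_, ?_, by simp, by simp⟩ <;> grind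
  rcases eq_or_ne w a with rfl | hwa
  · refine ⟨[o, b, l, w, v], by simp [-compl_adj, hvw.symm, *], ?_, ?_, by simp, by simp⟩ <;> grind
  · have haw : Gᶜ.Adj a w :=
      (h.compl_adj_of_leaf hw hwo hwa hwb h.a_mem hwa.symm h.ne_oa.symm).symm
    refine ⟨[o, b, l, a, w, v], by simp [-compl_adj, hvw.symm, *], ?_, ?_, by simp, by simp⟩ <;>
      grind

lemma hasSpanningTree_compl_insert (h : IsDoubleStar G S o a b) (hcard : 5 ≤ S.card) (hv : v ∉ S)
    (hw : w ∈ S) (hwb : w ≠ b) (hvw : Gᶜ.Adj v w) : HasSpanningTree Gᶜ (insert v S) 2 := by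
  obtain ⟨l, hchain, hnodup, hlS, hlen, hvl, hol, hal, hbl⟩ :=
    h.exists_isChain_compl_insert hcard hv hw hwb hvw
  refine hasSpanningTree_two_of_isChain_of_dense (N := {o, v}) hchain hnodup
    (fun x hx ↦ hlS x (List.mem_toFinset.1 hx)) (by lia)
    (by have := Finset.card_le_two (a := o) (b := v); lia) fun x hx hxl y hy hyx hyN ↦ ?_
  have hxS : ∀ {z}, z ∈ insert v S → z ≠ v → z ∈ S := fun hz hzv ↦
    (Finset.mem_insert.1 hz).resolve_left hzv
  have hne : ∀ {z}, z ∈ l → x ≠ z := fun hz e ↦ hxl (e ▸ hz)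
  rw [Finset.mem_insert, Finset.mem_singleton, not_or] at hyN
  exact h.compl_adj_of_leaf (hxS hx (hne hvl)) (hne hol) (hne hal) (hne hbl)
    (hxS hy hyN.2) hyx hyN.1

lemma insert_of_forall_adj_eq (h : IsDoubleStar G S o a b) (hv : v ∉ S) (hvo : G.Adj v o)
    (hvS : ∀ x ∈ S, G.Adj v x → x = o) : IsDoubleStar G (insert v S) o a b where
  o_mem := Finset.mem_insert_of_mem h.o_mem
  a_mem := Finset.mem_insert_of_mem h.a_mem
  b_mem := Finset.mem_insert_of_mem h.b_mem
  ne_oa := h.ne_oa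
  ne_ob := h.ne_ob
  ne_ab := h.ne_ab
  adj_iff := by
    have hne : v ≠ o ∧ v ≠ a ∧ v ≠ b :=
      ⟨fun e ↦ hv (e ▸ h.o_mem), fun e ↦ hv (e ▸ h.a_mem), fun e ↦ hv (e ▸ h.b_mem)⟩
    have hvadj : ∀ x ∈ S, G.Adj v x ↔ x = o := fun x hx ↦ ⟨hvS x hx, fun e ↦ e ▸ hvo⟩
    intro x hx y hy
    rcases Finset.mem_insert.1 hx with rfl | hxS <;> rcases Finset.mem_insert.1 hy with rfl | hyS
    · simp
    · rw [hvadj y hyS]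
      grind
    · rw [adj_comm, hvadj x hxS]
      grind
    · exact h.adj_iff x hxS y hyS

lemma hasSpanningTree_insert (h : IsDoubleStar G S o a b) (hcard : 5 ≤ S.card) (hv : v ∉ S)
    (hu : u ∈ S) (huo : u ≠ o) (hvu : G.Adj v u) :
    HasSpanningTree G (insert v S) (S.card - 2) := by
  obtain ⟨d, htree, hdo, hd⟩ := h.exists_treeDegrees
  refine htree.hasSpanningTree_insert (k := S.card - 2) (fun x ↦ ?_) hu hv hvu.symm ?_ le_rfl
  · rcases eq_or_ne x o with rfl | hxo
    · lia
    · have := hd x hxo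
      lia
  · have := hd u huo
    lia

lemma hasSpanningTree_insert_of_forall_adj (h : IsDoubleStar G S o a b) (hcard : 5 ≤ S.card)
    (hv : v ∉ S) (hvS : ∀ x ∈ S, x ≠ b → G.Adj v x) :
    HasSpanningTree G (insert v S) (S.card - 3) := by
  obtain ⟨l, hl, hlo, hla, hlb, -⟩ := exists_mem_ne_of_five_le_card hcard o a b o
  have hne : ∀ x ∈ S, x ≠ v := fun x hx e ↦ hv (e ▸ hx)
  have hmem : o ∈ S ∧ a ∈ S ∧ b ∈ S := ⟨h.o_mem, h.a_mem, h.b_mem⟩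
  have hchain : [o, l, v, a, b].IsChain G.Adj := by
    simp [h.adj_o hl hlo hlb, (hvS l hl hlb).symm, hvS a h.a_mem h.ne_ab, h.adj_ab]
  obtain ⟨d, htree, hdo, hd⟩ := exists_treeDegrees_of_isChain_of_star (S := insert v S) hchain
    (by simp [h.ne_oa, h.ne_ob, h.ne_ab, hlo.symm, hla, hlb, hne, hmem, hl, (hne _ _).symm])
    (by simp [Finset.insert_subset_iff, hmem, hl]) fun x hx hxl ↦ by
      simp only [List.mem_cons, List.not_mem_nil, or_false, not_or] at hxl
      exact h.adj_o ((Finset.mem_insert.1 hx).resolve_left hxl.2.2.1) hxl.1 hxl.2.2.2.2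
  rw [Finset.card_insert_of_notMem hv] at hdo
  simp only [List.length_cons, List.length_nil] at hdo
  refine ⟨d, htree, fun x ↦ ?_⟩
  rcases eq_or_ne x o with rfl | hxo
  · lia
  · have := hd x hxo
    lia

lemma insert_or_hasSmallTreePair (h : IsDoubleStar G S o a b) (hcard : 5 ≤ S.card)
    (hv : v ∉ S) (hu : u ∈ S) (hvu : G.Adj v u) (hw : w ∈ S) (hvw : Gᶜ.Adj v w) :
    IsDoubleStar G (insert v S) o a b ∨ HasSmallTreePair G (insert v S) := by
  have hcard' := Finset.card_insert_of_notMem hv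
  by_cases hall : ∀ x ∈ S, x ≠ b → G.Adj v x
  · exact .inr ⟨S.card - 3, 3, by lia, by lia, h.hasSpanningTree_insert_of_forall_adj hcard hv hall,
      (h.hasSpanningTree_compl hcard).insert_succ hw hv hvw.symm, by lia⟩
  push Not at hall
  obtain ⟨x, hx, hxb, hvx⟩ := hall
  have hcompl : HasSpanningTree Gᶜ (insert v S) 2 :=
    h.hasSpanningTree_compl_insert hcard hv hx hxb ⟨fun e ↦ hv (e ▸ hx), hvx⟩
  by_cases honly : ∀ x ∈ S, G.Adj v x → x = o
  · exact .inl (h.insert_of_forall_adj_eq hv (honly u hu hvu ▸ hvu) honly)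
  push Not at honly
  obtain ⟨y, hy, hvy, hyo⟩ := honly
  exact .inr ⟨S.card - 2, 2, by lia, le_rfl, h.hasSpanningTree_insert hcard hv hy hyo hvy, hcompl,
    by lia⟩

end IsDoubleStar

end DoubleStar

section SmallTreePair

variable {V : Type*} [DecidableEq V] {G : SimpleGraph V} {S : Finset V} {a b c d u v w : V}

lemma IsInducedP4.isDoubleStar_insert (h : IsInducedP4 G a b c d)
    (hv : v ∉ ({a, b, c, d} : Finset V)) (hvb : G.Adj v b)
    (hvS : ∀ x ∈ ({a, c, d} : Finset V), ¬ G.Adj v x) :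
    IsDoubleStar G (insert v {a, b, c, d}) b c d where
  o_mem := by simp
  a_mem := by simp
  b_mem := by simp
  ne_oa := h.adj_bc.ne
  ne_ob := h.ne_bd
  ne_ab := h.adj_cd.ne
  adj_iff := by
    have hac := h.ne_ac
    have had := h.ne_ad
    have hbd := h.ne_bd
    have hab := h.adj_ab.ne
    have hbc := h.adj_bc.ne
    have hcd := h.adj_cd.ne
    obtain ⟨_, _, _, _, _, _⟩ := h
    simp only [Finset.mem_insert, Finset.mem_singleton, forall_eq_or_imp, forall_eq, not_or] at *
    grind [adj_comm, SimpleGraph.irrefl]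

lemma IsInducedP4.exists_isDoubleStar_or_hasSpanningTree (h : IsInducedP4 G a b c d)
    (hv : v ∉ ({a, b, c, d} : Finset V)) (hu : u ∈ ({a, b, c, d} : Finset V)) (hvu : G.Adj v u) :
    (∃ o p q, IsDoubleStar G (insert v {a, b, c, d}) o p q) ∨
      HasSpanningTree G (insert v {a, b, c, d}) 2 := by
  have key : ∀ l : List V, l.IsChain G.Adj → l.Perm [v, a, b, c, d] →
      HasSpanningTree G (insert v {a, b, c, d}) 2 := fun l hchain hperm ↦ by
    have hnodup : [v, a, b, c, d].Nodup := by
      simpa [h.adj_ab.ne, h.adj_bc.ne, h.adj_cd.ne, h.ne_ac, h.ne_ad, h.ne_bd] using hv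
    have htree := hasSpanningTree_of_isChain (by rintro rfl; simp at hperm) hchain
      (hperm.nodup_iff.2 hnodup)
    rw [List.toFinset_eq_of_perm _ _ hperm] at htree
    simpa using htree
  by_cases hva : G.Adj v a
  · exact .inr (key [v, a, b, c, d] (by simp [hva, h.adj_ab, h.adj_bc, h.adj_cd]) (.refl _))
  by_cases hvd : G.Adj v d
  · exact .inr (key [a, b, c, d, v] (by simp [hvd.symm, h.adj_ab, h.adj_bc, h.adj_cd])
      (List.perm_append_comm (l₁ := [a, b, c, d]) (l₂ := [v])))
  by_cases hvb : G.Adj v b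
  · by_cases hvc : G.Adj v c
    · exact .inr (key [a, b, v, c, d] (by simp [hvb.symm, hvc, h.adj_ab, h.adj_cd])
        ((List.perm_append_comm (l₁ := [a, b]) (l₂ := [v])).append_right [c, d]))
    · exact .inl ⟨b, c, d, h.isDoubleStar_insert hv hvb (by simp [hva, hvc, hvd])⟩
  · have hvc : G.Adj v c := by
      simp only [Finset.mem_insert, Finset.mem_singleton] at hu
      rcases hu with rfl | rfl | rfl | rfl <;> first | assumption | contradiction
    have hrev : ({a, b, c, d} : Finset V) = {d, c, b, a} := by
      ext
      simp only [Finset.mem_insert, Finset.mem_singleton]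
      tauto
    rw [hrev] at hv ⊢
    exact .inl ⟨c, b, a, h.symm.isDoubleStar_insert hv hvc (by simp [hva, hvb, hvd])⟩

lemma HasSmallTreePair.compl (h : HasSmallTreePair G S) : HasSmallTreePair Gᶜ S := by
  obtain ⟨k, l, hk, hl, hG, hGc, hcard⟩ := h
  exact ⟨l, k, hl, hk, hGc, by rwa [compl_compl], by lia⟩

lemma HasSmallTreePair.insert (h : HasSmallTreePair G S) (hv : v ∉ S) (hu : u ∈ S)
    (hvu : G.Adj v u) (hw : w ∈ S) (hvw : Gᶜ.Adj v w) : HasSmallTreePair G (insert v S) := by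
  classical
  obtain ⟨k, l, hk, hl, hG, hGc, hcard⟩ := h
  have hcard' := Finset.card_insert_of_notMem hv
  have hsplit := S.card_filter_add_card_filter_not (G.Adj v ·)
  rcases le_total {x ∈ S | ¬ G.Adj v x}.card {x ∈ S | G.Adj v x}.card with hle | hle
  · have htree := hG.insert_of_card hk (by lia) hv (Finset.filter_subset (G.Adj v ·) S)
      (fun x hx ↦ (Finset.mem_filter.1 hx).2) (by lia)
    exact ⟨k, l + 1, hk, by lia, htree, hGc.insert_succ hw hv hvw.symm, by lia⟩
  · have htree := hGc.insert_of_card hl (by lia) hv (Finset.filter_subset (¬ G.Adj v ·) S)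
      (fun x hx ↦ ⟨fun e ↦ hv (e ▸ (Finset.mem_filter.1 hx).1), (Finset.mem_filter.1 hx).2⟩)
      (by lia)
    exact ⟨k + 1, l, by lia, hl, hG.insert_succ hu hv hvu.symm, htree, by lia⟩

lemma IsCoconnectedOn.exists_isDoubleStar_or_hasSpanningTree (h : IsCoconnectedOn G S)
    (hcard : S.card = 4) (hv : v ∉ S) (hu : u ∈ S) (hvu : G.Adj v u) :
    (∃ o a b, IsDoubleStar G (insert v S) o a b) ∨ HasSpanningTree G (insert v S) 2 := by
  obtain ⟨a, ha, b, hb, c, hc, d, hd, hP⟩ :=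
    h.exists_isInducedP4 (Finset.one_lt_card_iff_nontrivial.1 (by lia))
  have hS : {a, b, c, d} = S := by
    refine Finset.eq_of_subset_of_card_le (by simp [Finset.insert_subset_iff, ha, hb, hc, hd]) ?_
    simp [hcard, hP.adj_ab.ne, hP.adj_bc.ne, hP.adj_cd.ne, hP.ne_ac, hP.ne_ad, hP.ne_bd]
  subst hS
  exact hP.exists_isDoubleStar_or_hasSpanningTree hv hu hvu

lemma IsCoconnectedOn.exists_eq_insert (h : IsCoconnectedOn G S) (hcard : 5 ≤ S.card) :
    ∃ v T, v ∉ T ∧ S = insert v T ∧ IsCoconnectedOn G (T : Set V) ∧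
      (∃ u ∈ T, G.Adj v u) ∧ ∃ w ∈ T, Gᶜ.Adj v w := by
  obtain ⟨v, hv, hco⟩ := h.exists_erase hcard
  have hnt : (S : Set V).Nontrivial := Finset.one_lt_card_iff_nontrivial.1 (by lia)
  obtain ⟨u, hu, hvu⟩ := exists_adj_of_preconnected_induce h.1 hnt hv
  obtain ⟨w, hw, hvw⟩ := exists_adj_of_preconnected_induce h.2 hnt hv
  exact ⟨v, S.erase v, Finset.notMem_erase v S, (Finset.insert_erase hv).symm, hco,
    ⟨u, Finset.mem_erase.2 ⟨hvu.ne.symm, hu⟩, hvu⟩, w, Finset.mem_erase.2 ⟨hvw.ne.symm, hw⟩, hvw⟩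

lemma IsCoconnectedOn.exists_isDoubleStar_or_hasSmallTreePair (h : IsCoconnectedOn G S)
    (hcard : 5 ≤ S.card) :
    (∃ o a b, IsDoubleStar G S o a b) ∨ (∃ o a b, IsDoubleStar Gᶜ S o a b) ∨
      HasSmallTreePair G S := by
  induction S using Finset.strongInduction with
  | H S ih =>
    obtain ⟨v, T, hv, rfl, hco, ⟨u, hu, hvu⟩, w, hw, hvw⟩ := h.exists_eq_insert hcard
    have hinsert := Finset.card_insert_of_notMem hv
    by_cases hT : T.card = 4
    · rcases hco.exists_isDoubleStar_or_hasSpanningTree hT hv hu hvu with hD | hG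
      · exact .inl hD
      rcases hco.compl.exists_isDoubleStar_or_hasSpanningTree hT hv hw hvw with hD | hGc
      · exact .inr (.inl hD)
      exact .inr (.inr ⟨2, 2, le_rfl, le_rfl, hG, hGc, by lia⟩)
    have hT5 : 5 ≤ T.card := by lia
    rcases ih T (Finset.ssubset_insert hv) hco hT5 with ⟨o, a, b, hD⟩ | ⟨o, a, b, hD⟩ | hpair
    · exact (hD.insert_or_hasSmallTreePair hT5 hv hu hvu hw hvw).imp (⟨o, a, b, ·⟩) .inr
    · have hvu' : Gᶜᶜ.Adj v u := by rwa [compl_compl]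
      exact .inr ((hD.insert_or_hasSmallTreePair hT5 hv hw hvw hu hvu').imp (⟨o, a, b, ·⟩)
        fun hpair ↦ by simpa only [compl_compl] using hpair.compl)
    · exact .inr (.inr (hpair.insert hv hu hvu hw hvw))

end SmallTreePair

/-- The edges of `T` at each vertex have pairwise distinct colors under `c`. -/
def IsProperEdgeColoring {V α : Type*} (T : SimpleGraph V) (c : Sym2 V → α) : Prop :=
  ∀ ⦃x y z⦄, T.Adj x y → T.Adj x z → c s(x, y) = c s(x, z) → y = z

section Colorings

variable {V : Type*} {G T : SimpleGraph V} {k : ℕ} {o x y : V}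

lemma IsProperEdgeColoring.isChain_edges {α : Type*} {c : Sym2 V → α}
    (hc : IsProperEdgeColoring T c) {u v : V} {p : T.Walk u v} (hp : p.IsPath) :
    (p.edges.map c).IsChain (· ≠ ·) := by
  induction p with
  | nil => simp
  | cons h p ih =>
    have hchain := ih hp.of_cons
    cases p with
    | nil => simp
    | cons h' q =>
      refine List.isChain_cons_cons.2 ⟨fun hcolor : c s(_, _) = c s(_, _) ↦ ?_, hchain⟩
      rw [Sym2.eq_swap] at hcolor
      have hmem := ((Walk.cons_isPath_iff _ _).1 hp).2
      rw [hc h.symm h' hcolor] at hmem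
      simp at hmem

section EdgeUpdate

variable [DecidableEq V] {α : Type*} {c : Sym2 V → α} {γ : α} {u v : V}

lemma update_edge_apply_of_adj (hv : ∀ x, ¬ T.Adj v x) (hxy : T.Adj x y) :
    Function.update c s(u, v) γ s(x, y) = c s(x, y) := by
  refine Function.update_of_ne (fun e ↦ ?_) _ _
  rcases Sym2.eq_iff.1 e with ⟨rfl, rfl⟩ | ⟨rfl, rfl⟩
  exacts [hv _ hxy.symm, hv _ hxy]

lemma IsProperEdgeColoring.sup_edge (hc : IsProperEdgeColoring T c) (hv : ∀ x, ¬ T.Adj v x)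
    (hγ : ∀ x, T.Adj u x → c s(u, x) ≠ γ) :
    IsProperEdgeColoring (T ⊔ edge u v) (Function.update c s(u, v) γ) := by
  have hne : ∀ {x y z}, T.Adj x y → (edge u v).Adj x z →
      Function.update c s(u, v) γ s(x, y) ≠ Function.update c s(u, v) γ s(x, z) := by
    intro x y z hxy hxz
    rw [update_edge_apply_of_adj hv hxy]
    rcases ((edge_adj ..).1 hxz).1 with ⟨rfl, rfl⟩ | ⟨rfl, rfl⟩
    · simpa using hγ y hxy
    · exact absurd hxy (hv y)
  rintro x y z (hxy | hxy) (hxz | hxz) hcolor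
  · rw [update_edge_apply_of_adj hv hxy, update_edge_apply_of_adj hv hxz] at hcolor
    exact hc hxy hxz hcolor
  · exact absurd hcolor (hne hxy hxz)
  · exact absurd hcolor.symm (hne hxz hxy)
  · rw [edge_adj] at hxy hxz
    grind

lemma update_edge_apply_mem [DecidableEq α] {D : V → Finset α}
    (hD : ∀ x y, T.Adj x y → c s(x, y) ∈ D x) (hv : ∀ x, ¬ T.Adj v x)
    (hxy : (T ⊔ edge u v).Adj x y) :
    Function.update c s(u, v) γ s(x, y) ∈ if x = u ∨ x = v then insert γ (D x) else D x := by
  rw [sup_adj, edge_adj] at hxy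
  rcases hxy with hxy | ⟨⟨rfl, rfl⟩ | ⟨rfl, rfl⟩, -⟩
  · rw [update_edge_apply_of_adj hv hxy]
    split_ifs
    exacts [Finset.mem_insert_of_mem (hD x y hxy), hD x y hxy]
  · simp
  · simp [Sym2.eq_swap]

end EdgeUpdate

lemma reachable_sup_edge_of_mem_insert {S : Set V} {u v : V}
    (hT : ∀ x ∈ S, ∀ y ∈ S, T.Reachable x y) (hu : u ∈ S) :
    ∀ x ∈ insert v S, ∀ y ∈ insert v S, (T ⊔ edge u v).Reachable x y := by
  have hreach : ∀ x ∈ insert v S, (T ⊔ edge u v).Reachable x u := by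
    rintro x (rfl | hx)
    · rcases eq_or_ne u x with rfl | hux
      · exact .rfl
      · exact (show (T ⊔ edge u x).Adj x u from .inr (by simp [edge_adj, hux.symm])).reachable
    · exact (hT x hx u hu).mono le_sup_left
  exact fun x hx y hy ↦ (hreach x hx).trans (hreach y hy).symm

lemma TreeDegrees.exists_isProperEdgeColoring [DecidableEq V] {S : Finset V} {d : V → ℕ}
    (h : TreeDegrees G S d) (hd : ∀ x, d x ≤ k) (hk : 0 < k) :
    ∃ T ≤ G, ∃ c : Sym2 V → Fin k, IsProperEdgeColoring T c ∧
      (∀ x ∈ (S : Set V), ∀ y ∈ (S : Set V), T.Reachable x y) ∧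
      ∃ D : V → Finset (Fin k), (∀ x, (D x).card ≤ d x) ∧
        ∀ x y, T.Adj x y → c s(x, y) ∈ D x := by
  induction h with
  | singleton v =>
    refine ⟨⊥, bot_le, fun _ ↦ ⟨0, hk⟩, ?_, by simp, fun _ ↦ ∅, by simp, ?_⟩ <;>
      simp [IsProperEdgeColoring]
  | @attach S d u v h hu hv huv ih =>
    have hdu : d u < k := by simpa [huv.ne] using hd u
    obtain ⟨T, hTG, c, hc, hreach, D, hDcard, hD⟩ := ih fun x ↦
      (le_add_right (Nat.le_add_right _ _)).trans (hd x)
    have hDv : D v = ∅ := by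
      rw [← Finset.card_eq_zero, ← Nat.le_zero, ← h.eq_zero_of_notMem v hv]
      exact hDcard v
    have hTv : ∀ x, ¬ T.Adj v x := fun x hvx ↦ by simpa [hDv] using hD v x hvx
    obtain ⟨γ, -, hγ⟩ := Finset.exists_mem_notMem_of_card_lt_card (s := D u) (t := Finset.univ)
      (by simpa using (hDcard u).trans_lt hdu)
    refine ⟨T ⊔ edge u v, sup_le hTG ((edge_le_iff G).2 (.inr huv)), Function.update c s(u, v) γ,
      hc.sup_edge hTv fun x hx e ↦ hγ (e ▸ hD u x hx),
      by simpa only [Finset.coe_insert] using reachable_sup_edge_of_mem_insert hreach hu,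
      fun x ↦ if x = u ∨ x = v then insert γ (D x) else D x, fun x ↦ ?_,
      fun x y ↦ update_edge_apply_mem hD hTv⟩
    have hle := hDcard x
    have hins := Finset.card_insert_le γ (D x)
    rcases eq_or_ne x u with rfl | hxu
    · simpa [huv.ne] using hins.trans (Nat.succ_le_succ hle)
    rcases eq_or_ne x v with rfl | hxv
    · simpa [hxu] using hins.trans (Nat.succ_le_succ hle)
    · simpa [hxu, hxv] using hle

lemma pc_le_of_hasSpanningTree [Fintype V] [DecidableEq V] (h : HasSpanningTree G Finset.univ k)
    (hk : 0 < k) : pc G ≤ k := by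
  obtain ⟨d, htree, hd⟩ := h
  obtain ⟨T, hTG, c, hc, hreach, -⟩ := htree.exists_isProperEdgeColoring hd hk
  refine Nat.sInf_le ⟨c, fun u v _ ↦ ?_⟩
  obtain ⟨p, hp⟩ := (hreach u (by simp) v (by simp)).exists_isPath
  refine ⟨p.mapLe hTG, hp.mapLe hTG, ?_⟩
  rw [Walk.edges_mapLe_eq_edges]
  exact hc.isChain_edges hp

lemma exists_isProperPathColoring_pc [Finite V] (h : G.Connected) :
    ∃ c : Sym2 V → Fin (pc G), IsProperPathColoring G c := by
  have := Fintype.ofFinite (Sym2 V)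
  refine Nat.sInf_mem (s := {k | ∃ c : Sym2 V → Fin k, IsProperPathColoring G c})
    ⟨Fintype.card (Sym2 V), Fintype.equivFin (Sym2 V), fun u v _ ↦ ?_⟩
  obtain ⟨p, hp⟩ := h.exists_isPath u v
  exact ⟨p, hp, ((p.edges_nodup_of_support_nodup hp.support_nodup).map
    (Fintype.equivFin (Sym2 V)).injective).isChain⟩

namespace IsProperPathColoring

variable {c : Sym2 V → Fin k}

lemma two_le_of_not_adj_s18 (hc : IsProperPathColoring G c) (hne : x ≠ y) (hxy : ¬ G.Adj x y) :
    2 ≤ k := by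
  obtain ⟨p, -, hp⟩ := hc x y hne
  match p with
  | .nil => exact absurd rfl hne
  | .cons h .nil => exact absurd h hxy
  | .cons h (.cons h' q) =>
    by_contra! hk
    have : Subsingleton (Fin k) := Fin.subsingleton_iff_le_one.2 (by lia)
    exact (List.isChain_cons_cons.1 hp).1 (Subsingleton.elim _ _)

lemma ne_of_isBridge (hc : IsProperPathColoring G c) (hox : G.Adj o x) (hx : G.IsBridge s(o, x))
    (hoy : G.Adj o y) (hy : G.IsBridge s(o, y)) (hxy : x ≠ y) : c s(o, x) ≠ c s(o, y) := by
  obtain ⟨p, hp, hcol⟩ := hc x y hxy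
  rw [Sym2.eq_swap] at hx ⊢
  rw [isBridge_iff_forall_walk_mem_edges] at hx hy
  have hxp : s(x, o) ∈ p.edges := by
    simpa [hxy, hoy.ne, hox.ne.symm, Sym2.eq_iff] using hx (p.concat hoy.symm)
  have hyp : s(o, y) ∈ p.edges := by
    simpa [hxy.symm, hox.ne, Sym2.eq_iff] using hy (.cons hox p)
  cases p with
  | nil => exact absurd rfl hxy
  | @cons _ z _ h q =>
    obtain rfl : o = z := by simpa using hp.eq_snd_of_mem_edges hxp
    have hyq : s(o, y) ∈ q.edges := by
      simpa [hxy.symm, hox.ne, Sym2.eq_iff] using hyp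
    rw [hp.of_cons.eq_adj_toWalk_of_mem_edges hyq] at hcol
    exact (List.isChain_cons_cons.1 hcol).1

lemma card_le_of_forall_isBridge (hc : IsProperPathColoring G c) (N : Finset V)
    (hN : ∀ x ∈ N, G.Adj o x ∧ G.IsBridge s(o, x)) : N.card ≤ k := by
  simpa using Finset.card_le_card_of_injOn (t := Finset.univ) (fun x ↦ c s(o, x)) (by simp)
    fun x hx y hy hxy ↦ by_contra fun hne ↦
      hc.ne_of_isBridge (hN x hx).1 (hN x hx).2 (hN y hy).1 (hN y hy).2 hne hxy

end IsProperPathColoring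

end Colorings

section DoubleStarPC

variable {V : Type*} [Fintype V] {G : SimpleGraph V} {a b o x : V} {n : ℕ}

namespace IsDoubleStar

lemma isBridge (h : IsDoubleStar G Finset.univ o a b) (hxo : x ≠ o) (hxb : x ≠ b) :
    G.IsBridge s(o, x) := by
  rw [isBridge_iff_forall_walk_mem_edges]
  intro p
  obtain ⟨e, he, hfst, hsnd⟩ := p.exists_boundary_dart {z | z ≠ x ∧ (x = a → z ≠ b)}
    ⟨hxo.symm, fun _ ↦ h.ne_ob⟩ (by simp)
  have hadj := (h.adj_iff _ (Finset.mem_univ _) _ (Finset.mem_univ _)).1 e.adj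
  have hoa := h.ne_oa
  have hob := h.ne_ob
  have hab := h.ne_ab
  have hends : e.fst = o ∧ e.snd = x := by
    simp only [Set.mem_ofPred_eq, not_and, Classical.not_imp, not_not] at hfst hsnd
    grind
  have hedge : s(o, x) = e.edge := by
    rw [← hends.1, ← hends.2]
    rfl
  rw [hedge]
  exact List.mem_map_of_mem he

lemma card_le_pc_add_two (h : IsDoubleStar G Finset.univ o a b) (hG : G.Connected) :
    Fintype.card V ≤ pc G + 2 := by
  classical
  obtain ⟨c, hc⟩ := exists_isProperPathColoring_pc hG
  have hle := hc.card_le_of_forall_isBridge (o := o) (Finset.univ \ {o, b}) fun x hx ↦ by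
    simp only [Finset.mem_sdiff, Finset.mem_univ, Finset.mem_insert, Finset.mem_singleton, not_or,
      true_and] at hx
    exact ⟨h.adj_o (Finset.mem_univ x) hx.1 hx.2, h.isBridge hx.1 hx.2⟩
  have hcard := Finset.le_card_sdiff {o, b} (Finset.univ : Finset V)
  rw [Finset.card_univ, Finset.card_pair h.ne_ob] at hcard
  lia

lemma pc_add_pc_compl (h : IsDoubleStar G Finset.univ o a b) (hcard : 5 ≤ Fintype.card V)
    (hG : G.Connected) (hGc : Gᶜ.Connected) : pc G + pc Gᶜ = Fintype.card V := by
  classical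
  obtain ⟨c, hc⟩ := exists_isProperPathColoring_pc hGc
  have hlow : 2 ≤ pc Gᶜ := hc.two_le_of_not_adj_s18 h.ne_oa
    fun hadj ↦ hadj.2 (h.adj_o h.a_mem h.ne_oa.symm h.ne_ab)
  have hup : pc Gᶜ ≤ 2 := pc_le_of_hasSpanningTree (h.hasSpanningTree_compl hcard) two_pos
  obtain ⟨d, htree, hdo, hd⟩ := h.exists_treeDegrees
  rw [Finset.card_univ] at hdo
  have hup' : pc G ≤ Fintype.card V - 2 := by
    refine pc_le_of_hasSpanningTree ⟨d, htree, fun x ↦ ?_⟩ (by lia)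
    rcases eq_or_ne x o with rfl | hxo
    · lia
    · have := hd x hxo
      lia
  have hlow' := h.card_le_pc_add_two hG
  lia

lemma map_iso {W : Type*} [Fintype W] {H : SimpleGraph W} (h : IsDoubleStar G Finset.univ o a b)
    (φ : G ≃g H) : IsDoubleStar H Finset.univ (φ o) (φ a) (φ b) where
  o_mem := Finset.mem_univ _
  a_mem := Finset.mem_univ _
  b_mem := Finset.mem_univ _
  ne_oa := φ.injective.ne h.ne_oa
  ne_ob := φ.injective.ne h.ne_ob
  ne_ab := φ.injective.ne h.ne_ab
  adj_iff x _ y _ := by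
    obtain ⟨x, rfl⟩ := φ.surjective x
    obtain ⟨y, rfl⟩ := φ.surjective y
    simp only [φ.map_adj_iff, φ.injective.eq_iff, ne_eq,
      h.adj_iff x (Finset.mem_univ x) y (Finset.mem_univ y)]

lemma nonempty_iso {W : Type*} [Fintype W] {H : SimpleGraph W} {o' a' b' : W}
    (h : IsDoubleStar G Finset.univ o a b) (h' : IsDoubleStar H Finset.univ o' a' b')
    (hcard : Fintype.card V = Fintype.card W) : Nonempty (G ≃g H) := by
  classical
  have hoa := h.ne_oa
  have hob := h.ne_ob
  have hab := h.ne_ab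
  obtain ⟨e, he⟩ := Finset.exists_equiv_extend_of_card_eq (t := (Finset.univ : Finset W))
    (s := {o, a, b}) (f := fun x ↦ if x = o then o' else if x = a then a' else b') hcard (by simp)
    (by
      have := h'.ne_oa
      have := h'.ne_ob
      have := h'.ne_ab
      intro x hx y hy
      simp only [Finset.coe_insert, Finset.coe_singleton, Set.mem_insert_iff,
        Set.mem_singleton_iff] at hx hy
      grind)
  let g : V ≃ W := e.trans (Equiv.subtypeUnivEquiv Finset.mem_univ)
  have hgo : g o = o' := (he o (by simp)).trans (by simp)
  have hga : g a = a' := (he a (by simp)).trans (by simp [hoa.symm])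
  have hgb : g b = b' := (he b (by simp)).trans (by simp [hob.symm, hab.symm])
  refine ⟨g, fun {x y} ↦ ?_⟩
  simp only [h.adj_iff x (Finset.mem_univ x) y (Finset.mem_univ y),
    h'.adj_iff _ (Finset.mem_univ _) _ (Finset.mem_univ _), ← hgo, ← hga, ← hgb,
    g.injective.eq_iff, ne_eq]

end IsDoubleStar

lemma isDoubleStar_doubleStarT2 (hn : 3 ≤ n) :
    IsDoubleStar (doubleStarT2 n) Finset.univ ⟨0, by lia⟩ ⟨1, by lia⟩ ⟨2, by lia⟩ where
  o_mem := Finset.mem_univ _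
  a_mem := Finset.mem_univ _
  b_mem := Finset.mem_univ _
  ne_oa := by simp
  ne_ob := by simp
  ne_ab := by simp
  adj_iff x _ y _ := by
    simp only [doubleStarT2, fromRel_adj, Fin.ext_iff, ne_eq]
    lia

lemma nonempty_iso_doubleStarT2_iff (hn : Fintype.card V = n) (h3 : 3 ≤ n) :
    Nonempty (G ≃g doubleStarT2 n) ↔ ∃ o a b, IsDoubleStar G Finset.univ o a b := by
  have hD := isDoubleStar_doubleStarT2 h3
  exact ⟨fun ⟨φ⟩ ↦ ⟨_, _, _, hD.map_iso φ.symm⟩,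
    fun ⟨_, _, _, h⟩ ↦ h.nonempty_iso hD (by simpa using hn)⟩

end DoubleStarPC

lemma IsCoconnectedOn.univ {V : Type*} [Fintype V] {G : SimpleGraph V} (hG : G.Connected)
    (hGc : Gᶜ.Connected) : IsCoconnectedOn G (Finset.univ : Finset V) := by
  rw [Finset.coe_univ]
  exact ⟨(induceUnivIso G).connected_iff.2 hG |>.preconnected,
    (induceUnivIso Gᶜ).connected_iff.2 hGc |>.preconnected⟩

lemma HasSmallTreePair.pc_add_pc_compl_lt {V : Type*} [Fintype V] [DecidableEq V]
    {G : SimpleGraph V} (h : HasSmallTreePair G Finset.univ) : pc G + pc Gᶜ < Fintype.card V := by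
  obtain ⟨k, l, hk, hl, hG, hGc, hcard⟩ := h
  have hpc := pc_le_of_hasSpanningTree hG (by lia)
  have hpc' := pc_le_of_hasSpanningTree hGc (by lia)
  rw [Finset.card_univ] at hcard
  lia

/-- Nordhaus-Gaddum upper bound: if `G` and `Gᶜ` are both connected on `n ≥ 5` vertices,
then `pc G + pc Gᶜ ≤ n`, with equality iff `G ≅ T(2, n-2)` or `Gᶜ ≅ T(2, n-2)`. -/
theorem nordhaus_gaddum_upper {V : Type*} [Fintype V] (G : SimpleGraph V) (n : ℕ)
    (hn : Fintype.card V = n) (h5 : 5 ≤ n) (hG : G.Connected) (hGc : Gᶜ.Connected) :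
    pc G + pc Gᶜ ≤ n ∧
      (pc G + pc Gᶜ = n ↔
        Nonempty (G ≃g doubleStarT2 n) ∨ Nonempty (Gᶜ ≃g doubleStarT2 n)) := by
  classical
  subst hn
  rw [nonempty_iso_doubleStarT2_iff rfl (by lia), nonempty_iso_doubleStarT2_iff rfl (by lia)]
  have hpc : (∃ o a b, IsDoubleStar G Finset.univ o a b) ∨
      (∃ o a b, IsDoubleStar Gᶜ Finset.univ o a b) → pc G + pc Gᶜ = Fintype.card V := by
    rintro (⟨o, a, b, h⟩ | ⟨o, a, b, h⟩)
    · exact h.pc_add_pc_compl h5 hG hGc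
    · have hGcc : Gᶜᶜ.Connected := by rwa [compl_compl]
      simpa only [compl_compl, add_comm] using h.pc_add_pc_compl h5 hGc hGcc
  rcases or_assoc.2 ((IsCoconnectedOn.univ hG hGc).exists_isDoubleStar_or_hasSmallTreePair h5) with
    hstar | hpair
  · exact ⟨(hpc hstar).le, iff_of_true (hpc hstar) hstar⟩
  · have hlt := hpair.pc_add_pc_compl_lt
    exact ⟨hlt.le, iff_of_false hlt.ne fun hstar ↦ hlt.ne (hpc hstar)⟩
end
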